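/- Every connected, noncompact, second-countable topological surface without boundary admits a compact exhaustion by connected compact subsurfaces: there exist compact connected subsurfaces-with-boundary M₁ ⊆ M₂ ⊆ ⋯ with M_n ⊆ int(M_{n+1}) for all n and ⋃_n M_n = M. -/

import Mathlib

variable {M : Type*} [TopologicalSpace M]

/-- A subset `S` of a topological space is a (topological) subsurface with boundary
if every point of `S` has an open neighborhood in `S` homeomorphic either to ℝ²
or to the closed half-plane `ℝ × [0,∞)`. -/
def IsSubsurfaceWithBoundary (S : Set M) : Prop :=
  ∀ x : S, ∃ U : Set S, IsOpen U ∧ x ∈ U ∧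
    (Nonempty (U ≃ₜ (ℝ × ℝ)) ∨ Nonempty (U ≃ₜ (ℝ × {y : ℝ // 0 ≤ y})))

/-!
Build the exhaustion from compact connected sets that are flat at every frontier point: a chart
carries them to a closed half plane. A closed coordinate disc is such a set, so by connectedness
and compactness it suffices to enlarge a flat set so as to contain a given coordinate disc which
it meets. In that coordinate the set is a closed set `B` of the plane with flat frontier, and
adding the disc fails only because its circle may meet the frontier of `B` badly, as the latter is
merely a topological curve.

The remedy is complex analysis. At a flat frontier point, a half disc on the complementary side of
`B` is a Jordan domain; its Riemann map extends to a homeomorphism up to the boundary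
(Carathéodory, by the length-area method), and extending further across the boundary gives a chart
which is conformal off `B` and carries `B` to the exterior of the unit disc. Add to `B`, along with
the given disc, the preimages in finitely many such charts of discs centered on the unit circle,
whose interiors cover the part of the frontier of `B` met by the given disc. Off `B` all these
discs are bounded by real analytic curves, so by Sard's theorem for almost all radii the curves
cross transversally, at most two at a time, and never on the frontier of `B`. Transverse corners
are flat, and so is the corner between the unit circle and a circle centered on it.
-/

open Set Filter Metric Topology MeasureTheory
open scoped ComplexConjugate

namespace SurfaceExhaustion

/-! ### The Riemann mapping theorem -/

section NormalFamilies

lemma le_norm_of_forall_mem_sphere_le_norm {g : ℂ → ℂ} {a : ℂ} {r m : ℝ} (hr : 0 < r) (hm : 0 < m)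
    (hg : DifferentiableOn ℂ g (closedBall a r)) (hg0 : ∀ z ∈ closedBall a r, g z ≠ 0)
    (hmg : ∀ z ∈ sphere a r, m ≤ ‖g z‖) : m ≤ ‖g a‖ := by
  have hinv : DiffContOnCl ℂ (fun z => (g z)⁻¹) (ball a r) := by
    apply DifferentiableOn.diffContOnCl
    rw [closure_ball a hr.ne']
    exact hg.inv hg0
  have hbound : ∀ z ∈ frontier (ball a r), ‖(g z)⁻¹‖ ≤ m⁻¹ := fun z hz => by
    rw [frontier_ball a hr.ne'] at hz
    rw [norm_inv]
    exact inv_anti₀ hm (hmg z hz)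
  have hmax := Complex.norm_le_of_forall_mem_frontier_norm_le isBounded_ball hinv hbound
    (subset_closure (mem_ball_self hr))
  rw [norm_inv] at hmax
  exact (inv_le_inv₀ (norm_pos_iff.2 (hg0 a (mem_closedBall_self hr.le))) hm).1 hmax

variable {ι : Type*} {l : Filter ι} [l.NeBot] {U : Set ℂ} {f : ι → ℂ → ℂ} {F : ℂ → ℂ}

lemma eventually_eq_zero_of_tendstoLocallyUniformlyOn (hU : IsOpen U)
    (hf : ∀ n, DifferentiableOn ℂ (f n) U) (hf0 : ∀ n, ∀ z ∈ U, f n z ≠ 0)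
    (hF : TendstoLocallyUniformlyOn f F l U) {a : ℂ} (ha : a ∈ U) (hFa : F a = 0) :
    ∀ᶠ z in 𝓝 a, F z = 0 := by
  have hFd : DifferentiableOn ℂ F U := hF.differentiableOn (Eventually.of_forall hf) hU
  refine (hFd.analyticAt (hU.mem_nhds ha)).eventually_eq_zero_or_eventually_ne_zero.resolve_right
    fun hne => ?_
  obtain ⟨r, hr, hrU⟩ := nhds_basis_closedBall.mem_iff.1
    (inter_mem (eventually_nhdsWithin_iff.1 hne) (hU.mem_nhds ha))
  have hsub : closedBall a r ⊆ U := fun z hz => (hrU hz).2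
  have hsphere : ∀ z ∈ sphere a r, F z ≠ 0 := fun z hz =>
    (hrU (sphere_subset_closedBall hz)).1 (ne_of_mem_sphere hz hr.ne')
  obtain ⟨z₀, hz₀, hmin⟩ := (isCompact_sphere a r).exists_isMinOn
    (NormedSpace.sphere_nonempty.2 hr.le)
    (hFd.continuousOn.mono (sphere_subset_closedBall.trans hsub)).norm
  have hm : 0 < ‖F z₀‖ := norm_pos_iff.2 (hsphere z₀ hz₀)
  have hunif := (tendstoLocallyUniformlyOn_iff_forall_isCompact hU).1 hF _ hsub
    (isCompact_closedBall a r)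
  obtain ⟨n, hn⟩ := (Metric.tendstoUniformlyOn_iff.1 hunif (‖F z₀‖ / 2) (half_pos hm)).exists
  have hcenter : ‖f n a‖ < ‖F z₀‖ / 2 := by
    simpa only [hFa, dist_zero_left] using hn a (mem_closedBall_self hr.le)
  have hle : ∀ z ∈ sphere a r, ‖F z₀‖ / 2 ≤ ‖f n z‖ := fun z hz => by
    have hclose := hn z (sphere_subset_closedBall hz)
    have hFz : ‖F z₀‖ ≤ ‖F z‖ := hmin hz
    rw [dist_eq_norm] at hclose
    linarith [norm_sub_norm_le (F z) (f n z)]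
  exact hcenter.not_ge (le_norm_of_forall_mem_sphere_le_norm hr (half_pos hm) ((hf n).mono hsub)
    (fun z hz => hf0 n z (hsub hz)) hle)

lemma injOn_of_tendstoLocallyUniformlyOn (hU : IsOpen U)
    (hf : ∀ n, DifferentiableOn ℂ (f n) U) (hinj : ∀ n, InjOn (f n) U)
    (hF : TendstoLocallyUniformlyOn f F l U) (hFc : ∀ z ∈ U, ∀ c, ¬ ∀ᶠ y in 𝓝 z, F y = c) :
    InjOn F U := by
  intro a ha b hb hab
  by_contra hne
  have hconst : TendstoLocallyUniformlyOn (fun n (_ : ℂ) => f n b) (fun _ => F b) l (U \ {b}) :=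
    ((hF.tendsto_at hb).tendstoUniformlyOn_const _).tendstoLocallyUniformlyOn
  have hzero := eventually_eq_zero_of_tendstoLocallyUniformlyOn (hU.sdiff isClosed_singleton)
    (fun n => ((hf n).mono sdiff_subset).sub_const (f n b))
    (fun n z hz => sub_ne_zero.2 fun h => hz.2 (hinj n hz.1 hb h))
    ((hF.mono sdiff_subset).sub hconst) ⟨ha, hne⟩ (sub_eq_zero.2 hab)
  exact hFc a ha (F b) (hzero.mono fun _ => sub_eq_zero.1)

lemma exists_tendstoLocallyUniformlyOn_of_mapsTo_closedBall (u : Ultrafilter ι) (hU : IsOpen U)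
    {c : ℂ} {C : ℝ} (hf : ∀ n, DifferentiableOn ℂ (f n) U)
    (hmaps : ∀ n, MapsTo (f n) U (closedBall c C)) :
    ∃ F : ℂ → ℂ, TendstoLocallyUniformlyOn f F u U := by
  have hpointwise : ∀ z ∈ U, ∃ w, Tendsto (fun n => f n z) u (𝓝 w) := fun z hz => by
    obtain ⟨w, -, hw⟩ := (isCompact_closedBall c C).ultrafilter_le_nhds (u.map fun n => f n z)
      (le_principal_iff.2 (Filter.mem_map.2 (Eventually.of_forall fun n => hmaps n hz)))
    exact ⟨w, hw⟩
  choose! F hF using hpointwise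
  refine ⟨F, Metric.tendstoLocallyUniformlyOn_iff.2 fun ε hε x hx => ?_⟩
  obtain ⟨R, hR, hsub⟩ := Metric.isOpen_iff.1 hU x hx
  have hlip : ∀ y ∈ ball x R, ∀ n, dist (f n y) (f n x) ≤ 2 * C / R * dist y x := fun y hy n => by
    refine Complex.dist_le_div_mul_dist_of_mapsTo_ball ((hf n).mono hsub) (fun z hz => ?_) hy
    have hz' := mem_closedBall.1 (hmaps n (hsub hz))
    have hx' := mem_closedBall.1 (hmaps n hx)
    rw [mem_closedBall]
    linarith [dist_triangle_right (f n z) (f n x) c]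
  have hlipF : ∀ y ∈ ball x R, dist (F y) (F x) ≤ 2 * C / R * dist y x := fun y hy =>
    le_of_tendsto ((hF y (hsub hy)).dist (hF x hx)) (Eventually.of_forall (hlip y hy))
  have hsmall : ∀ᶠ y in 𝓝 x, 2 * C / R * dist y x < ε / 3 := by
    have hcont : Continuous fun y => 2 * C / R * dist y x := by fun_prop
    exact hcont.continuousAt.eventually_lt continuousAt_const (by simpa using by positivity)
  refine ⟨_, mem_nhdsWithin_of_mem_nhds (inter_mem hsmall (ball_mem_nhds x hR)), ?_⟩
  filter_upwards [Metric.tendsto_nhds.1 (hF x hx) (ε / 3) (by positivity)] with n hn y hy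
  have hsmall_y : 2 * C / R * dist y x < ε / 3 := hy.1
  have htri := dist_triangle4 (F y) (F x) (f n x) (f n y)
  rw [dist_comm (F x), dist_comm (f n x) (f n y)] at htri
  linarith [hlip y hy.2 n, hlipF y hy.2]

end NormalFamilies

section DiscAutomorphism

/-- The automorphism `z ↦ (z - a) / (1 - ā z)` of the unit disc exchanging the roles of `a` and
`0`; its values are only meaningful for `a` and `z` in the unit disc. -/
noncomputable def discAutomorphism (a z : ℂ) : ℂ := (z - a) / (1 - conj a * z)

lemma one_sub_conj_mul_ne_zero {a z : ℂ} (ha : ‖a‖ < 1) (hz : ‖z‖ < 1) : 1 - conj a * z ≠ 0 := by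
  refine sub_ne_zero.2 fun h => ?_
  have hnorm := congrArg norm h
  rw [norm_mul, RCLike.norm_conj, norm_one] at hnorm
  exact (mul_lt_one_of_nonneg_of_lt_one_left (norm_nonneg a) ha hz.le).ne' hnorm

lemma discAutomorphism_self (a : ℂ) : discAutomorphism a a = 0 := by simp [discAutomorphism]

lemma discAutomorphism_zero (a : ℂ) : discAutomorphism a 0 = -a := by simp [discAutomorphism]

lemma hasDerivAt_discAutomorphism {a z : ℂ} (ha : ‖a‖ < 1) (hz : ‖z‖ < 1) :
    HasDerivAt (discAutomorphism a) ((1 - conj a * a) / (1 - conj a * z) ^ 2) z := by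
  have hden : HasDerivAt (fun z : ℂ => 1 - conj a * z) (-(conj a * 1)) z :=
    ((hasDerivAt_id z).const_mul _).const_sub 1
  refine (((hasDerivAt_id z).sub_const a).fun_div hden (one_sub_conj_mul_ne_zero ha hz)).congr_deriv
    ?_
  simp only [id]
  ring

lemma norm_discAutomorphism_lt_one {a z : ℂ} (ha : ‖a‖ < 1) (hz : ‖z‖ < 1) :
    ‖discAutomorphism a z‖ < 1 := by
  rw [discAutomorphism, norm_div, div_lt_one (norm_pos_iff.2 (one_sub_conj_mul_ne_zero ha hz))]
  have hdiff : ‖1 - conj a * z‖ ^ 2 - ‖z - a‖ ^ 2 = (1 - ‖a‖ ^ 2) * (1 - ‖z‖ ^ 2) := by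
    simp only [← Complex.normSq_eq_norm_sq, Complex.normSq_apply, Complex.sub_re, Complex.sub_im,
      Complex.mul_re, Complex.mul_im, Complex.one_re, Complex.one_im, Complex.conj_re,
      Complex.conj_im]
    ring
  have ha' : 0 < 1 - ‖a‖ ^ 2 := sub_pos.2 (pow_lt_one₀ (norm_nonneg a) ha two_ne_zero)
  have hz' : 0 < 1 - ‖z‖ ^ 2 := sub_pos.2 (pow_lt_one₀ (norm_nonneg z) hz two_ne_zero)
  exact lt_of_pow_lt_pow_left₀ 2 (norm_nonneg _) (by linarith [mul_pos ha' hz'])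

lemma discAutomorphism_injOn {a : ℂ} (ha : ‖a‖ < 1) :
    InjOn (discAutomorphism a) {z | ‖z‖ < 1} := by
  intro z hz w hw h
  rw [discAutomorphism, discAutomorphism,
    div_eq_div_iff (one_sub_conj_mul_ne_zero ha hz) (one_sub_conj_mul_ne_zero ha hw)] at h
  have hprod : (z - w) * (1 - conj a * a) = 0 := by linear_combination h
  exact sub_eq_zero.1 ((mul_eq_zero.1 hprod).resolve_right (one_sub_conj_mul_ne_zero ha ha))

end DiscAutomorphism

/-- Conformal embeddings of `U` into the unit disc, the maps competing in the extremal problem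
behind the Riemann mapping theorem. -/
structure IsDiscEmbedding (U : Set ℂ) (f : ℂ → ℂ) : Prop where
  differentiableOn : DifferentiableOn ℂ f U
  injOn : InjOn f U
  norm_lt_one : ∀ z ∈ U, ‖f z‖ < 1
  deriv_ne_zero : ∀ z ∈ U, deriv f z ≠ 0

namespace IsDiscEmbedding

variable {U : Set ℂ} {f : ℂ → ℂ}

lemma hasDerivAt (h : IsDiscEmbedding U f) {z : ℂ} (hz : z ∈ U) : HasDerivAt f (deriv f z) z :=
  (differentiableAt_of_deriv_ne_zero (h.deriv_ne_zero z hz)).hasDerivAt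

lemma hasDerivAt_discAutomorphism_comp (h : IsDiscEmbedding U f) {a : ℂ} (ha : ‖a‖ < 1) {z : ℂ}
    (hz : z ∈ U) : HasDerivAt (discAutomorphism a ∘ f)
      ((1 - conj a * a) / (1 - conj a * f z) ^ 2 * deriv f z) z :=
  (hasDerivAt_discAutomorphism ha (h.norm_lt_one z hz)).comp z (h.hasDerivAt hz)

lemma discAutomorphism_comp (h : IsDiscEmbedding U f) {a : ℂ} (ha : ‖a‖ < 1) :
    IsDiscEmbedding U (discAutomorphism a ∘ f) where
  differentiableOn _ hz :=
    (h.hasDerivAt_discAutomorphism_comp ha hz).differentiableAt.differentiableWithinAt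
  injOn := (discAutomorphism_injOn ha).comp h.injOn h.norm_lt_one
  norm_lt_one z hz := norm_discAutomorphism_lt_one ha (h.norm_lt_one z hz)
  deriv_ne_zero z hz := by
    rw [(h.hasDerivAt_discAutomorphism_comp ha hz).deriv]
    exact mul_ne_zero (div_ne_zero (one_sub_conj_mul_ne_zero ha ha)
      (pow_ne_zero _ (one_sub_conj_mul_ne_zero ha (h.norm_lt_one z hz)))) (h.deriv_ne_zero z hz)

lemma exists_sqrt (hU : IsOpen U) (hUc : IsSimplyConnected U) (h : IsDiscEmbedding U f)
    (h0 : ∀ z ∈ U, f z ≠ 0) : ∃ s : ℂ → ℂ, IsDiscEmbedding U s ∧ (∀ z, s z ^ 2 = f z) ∧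
      ∀ z ∈ U, deriv s z = deriv f z / (2 * s z) := by
  obtain ⟨s, hsc, hs⟩ := Complex.exists_continuousOn_pow_eq hUc hU h.differentiableOn.continuousOn
    (fun ⟨z, hz, hfz⟩ => h0 z hz hfz) two_ne_zero
  have hs0 : ∀ z ∈ U, 2 * s z ≠ 0 := fun z hz =>
    mul_ne_zero two_ne_zero fun hsz => h0 z hz (by rw [← hs z, hsz, zero_pow two_ne_zero])
  have hderiv : ∀ z ∈ U, HasDerivAt s (deriv f z / (2 * s z)) z := fun z hz => by
    rw [hasDerivAt_iff_tendsto_slope]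
    have hsum : Tendsto (fun w => s w + s z) (𝓝[≠] z) (𝓝 (2 * s z)) := by
      rw [two_mul]
      exact ((hsc.continuousAt (hU.mem_nhds hz)).add continuousAt_const).mono_left
        nhdsWithin_le_nhds
    refine ((hasDerivAt_iff_tendsto_slope.1 (h.hasDerivAt hz)).div hsum (hs0 z hz)).congr' ?_
    filter_upwards [hsum.eventually_ne (hs0 z hz)] with w hw
    simp only [slope, vsub_eq_sub, smul_eq_mul, Pi.div_apply]
    rw [← hs w, ← hs z, div_eq_iff hw]
    ring
  refine ⟨s, ⟨fun z hz => (hderiv z hz).differentiableAt.differentiableWithinAt,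
    fun z hz w hw hzw => h.injOn hz hw (by rw [← hs z, ← hs w, hzw]), fun z hz => ?_,
    fun z hz => ?_⟩, hs, fun z hz => (hderiv z hz).deriv⟩
  · have hlt := h.norm_lt_one z hz
    rw [← hs z, norm_pow] at hlt
    exact (sq_lt_one_iff₀ (norm_nonneg _)).1 hlt
  · rw [(hderiv z hz).deriv]
    exact div_ne_zero (h.deriv_ne_zero z hz) (hs0 z hz)

/- Koebe's trick: move the omitted value to `0`, take a square root, and move the image of the
base point back to `0`. With `b` the square root of `-a`, the derivative gets multiplied by
`(1 + |b|²) / (2b)`. -/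
lemma exists_norm_deriv_lt (hU : IsOpen U) (hUc : IsSimplyConnected U) (h : IsDiscEmbedding U f)
    {w : ℂ} (hw : w ∈ U) (hfw : f w = 0) {a : ℂ} (ha : ‖a‖ < 1) (haf : a ∉ f '' U) :
    ∃ F : ℂ → ℂ, IsDiscEmbedding U F ∧ F w = 0 ∧ ‖deriv f w‖ < ‖deriv F w‖ := by
  obtain ⟨s, hs, hsq, hsderiv⟩ := (h.discAutomorphism_comp ha).exists_sqrt hU hUc
    fun z hz hz0 => haf ⟨z, hz, discAutomorphism_injOn ha (h.norm_lt_one z hz) ha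
      (hz0.trans (discAutomorphism_self a).symm)⟩
  have hb : ‖s w‖ < 1 := hs.norm_lt_one w hw
  refine ⟨_, hs.discAutomorphism_comp hb, discAutomorphism_self _, ?_⟩
  rw [(hs.hasDerivAt_discAutomorphism_comp hb hw).deriv, hsderiv w hw,
    (h.hasDerivAt_discAutomorphism_comp ha hw).deriv, hfw]
  have hba : s w ^ 2 = -a := by rw [hsq, Function.comp_apply, hfw, discAutomorphism_zero]
  have hb0 : s w ≠ 0 := fun hsw => haf ⟨w, hw, by simpa [hsw, hfw, eq_comm] using hba⟩
  obtain rfl : a = -s w ^ 2 := by rw [hba, neg_neg]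
  generalize s w = b at hb hb0
  have hb_conj : 1 - conj b * b ≠ 0 := one_sub_conj_mul_ne_zero hb hb
  have hfactor : (1 - conj b * b) / (1 - conj b * b) ^ 2 * ((1 - conj (-b ^ 2) * (-b ^ 2)) /
      (1 - conj (-b ^ 2) * 0) ^ 2 * deriv f w / (2 * b))
      = (1 + conj b * b) / (2 * b) * deriv f w := by
    simp only [map_neg, map_pow, mul_zero, sub_zero, one_pow, div_one]
    field_simp
    ring
  have hnum : ‖1 + conj b * b‖ = 1 + ‖b‖ ^ 2 := by
    rw [Complex.conj_mul', ← Complex.ofReal_pow, ← Complex.ofReal_one, ← Complex.ofReal_add,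
      Complex.norm_of_nonneg (by positivity)]
  rw [hfactor, norm_mul, norm_div, hnum, norm_mul, Complex.norm_ofNat]
  refine lt_mul_of_one_lt_left (norm_pos_iff.2 (h.deriv_ne_zero w hw)) ?_
  rw [one_lt_div (mul_pos two_pos (norm_pos_iff.2 hb0))]
  linarith [sq_pos_of_pos (sub_pos.2 hb)]

lemma of_tendstoLocallyUniformlyOn {ι : Type*} {l : Filter ι} [l.NeBot] {f : ι → ℂ → ℂ} {F : ℂ → ℂ}
    (hU : IsOpen U) (hUc : IsPreconnected U) (hf : ∀ n, IsDiscEmbedding U (f n))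
    (hF : TendstoLocallyUniformlyOn f F l U) {w : ℂ} (hw : w ∈ U) (hFw : deriv F w ≠ 0) :
    IsDiscEmbedding U F := by
  have hfd : ∀ n, DifferentiableOn ℂ (f n) U := fun n => (hf n).differentiableOn
  have hFd : DifferentiableOn ℂ F U := hF.differentiableOn (Eventually.of_forall hfd) hU
  have hFan : AnalyticOnNhd ℂ F U := hFd.analyticOnNhd hU
  have hderiv0 : ∀ z ∈ U, ¬ ∀ᶠ y in 𝓝 z, deriv F y = 0 := fun z hz h =>
    hFw (hFan.deriv.eqOn_of_preconnected_of_eventuallyEq (g := fun _ => 0) analyticOnNhd_const hUc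
      hz h hw)
  have hconst : ∀ z ∈ U, ∀ c, ¬ ∀ᶠ y in 𝓝 z, F y = c := fun z hz c h =>
    hderiv0 z hz (h.eventually_nhds.mono fun y hy => by
      rw [EventuallyEq.deriv_eq (f := fun _ => c) hy, deriv_const])
  have hle : ∀ z ∈ U, ‖F z‖ ≤ 1 := fun z hz => le_of_tendsto (hF.tendsto_at hz).norm
    (Eventually.of_forall fun n => ((hf n).norm_lt_one z hz).le)
  refine ⟨hFd, injOn_of_tendstoLocallyUniformlyOn hU hfd (fun n => (hf n).injOn) hF hconst,
    fun z hz => (hle z hz).lt_of_ne fun hz1 => ?_, fun z hz hz0 => ?_⟩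
  · have hmax : IsLocalMax (norm ∘ F) z := by
      filter_upwards [hU.mem_nhds hz] with y hy
      simpa only [Function.comp, hz1] using hle y hy
    exact hconst z hz _ (Complex.eventually_eq_of_isLocalMax_norm
      (hFd.eventually_differentiableAt (hU.mem_nhds hz)) hmax)
  · exact hderiv0 z hz (eventually_eq_zero_of_tendstoLocallyUniformlyOn hU
      (fun n => (hfd n).deriv hU) (fun n => (hf n).deriv_ne_zero)
      (hF.deriv (Eventually.of_forall hfd) hU) hz hz0)

lemma exists_norm_deriv_maximal (hU : IsOpen U) (hUc : IsPreconnected U)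
    (h : IsDiscEmbedding U f) {w : ℂ} (hw : w ∈ U) :
    ∃ F, IsDiscEmbedding U F ∧ F w = 0 ∧
      ∀ G, IsDiscEmbedding U G → G w = 0 → ‖deriv G w‖ ≤ ‖deriv F w‖ := by
  set S : Set ℝ := {t | ∃ g, IsDiscEmbedding U g ∧ g w = 0 ∧ ‖deriv g w‖ = t}
  obtain ⟨R, hR, hRU⟩ := Metric.isOpen_iff.1 hU w hw
  have hbdd : BddAbove S := by
    refine ⟨1 / R, ?_⟩
    rintro _ ⟨g, hg, hgw, rfl⟩
    refine Complex.norm_deriv_le_div_of_mapsTo_ball (hg.differentiableOn.mono hRU)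
      (fun z hz => ?_) hR
    simpa [hgw] using (hg.norm_lt_one z (hRU hz)).le
  have hne : S.Nonempty := ⟨_, _, h.discAutomorphism_comp (h.norm_lt_one w hw),
    discAutomorphism_self _, rfl⟩
  have hpos : 0 < sSup S := by
    obtain ⟨_, g, hg, hgw, rfl⟩ := hne
    exact (norm_pos_iff.2 (hg.deriv_ne_zero w hw)).trans_le (le_csSup hbdd ⟨g, hg, hgw, rfl⟩)
  obtain ⟨t, -, ht, htS⟩ := exists_seq_tendsto_sSup hne hbdd
  choose f hf hfw hft using htS
  obtain ⟨F, hF⟩ := exists_tendstoLocallyUniformlyOn_of_mapsTo_closedBall (hyperfilter ℕ) hU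
    (c := 0) (C := 1) (fun n => (hf n).differentiableOn)
    (fun n z hz => by simpa using ((hf n).norm_lt_one z hz).le)
  have hderivF : ‖deriv F w‖ = sSup S := by
    have hlim := hF.deriv (Eventually.of_forall fun n => (hf n).differentiableOn) hU
    refine tendsto_nhds_unique ((hlim.tendsto_at hw).norm.congr hft) (ht.mono_left ?_)
    rw [← Nat.cofinite_eq_atTop]
    exact hyperfilter_le_cofinite
  refine ⟨F, of_tendstoLocallyUniformlyOn hU hUc hf hF hw ?_, ?_, fun G hG hGw => ?_⟩
  · rwa [← norm_pos_iff, hderivF]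
  · exact tendsto_nhds_unique (hF.tendsto_at hw) (by simpa only [hfw] using tendsto_const_nhds)
  · exact hderivF ▸ le_csSup hbdd ⟨G, hG, hGw, rfl⟩

end IsDiscEmbedding

lemma exists_isDiscEmbedding_of_isBounded {U : Set ℂ} (hU : Bornology.IsBounded U) :
    ∃ f, IsDiscEmbedding U f := by
  obtain ⟨C, hC, hUC⟩ := hU.exists_pos_norm_lt
  have hC' : (C : ℂ)⁻¹ ≠ 0 := inv_ne_zero (Complex.ofReal_ne_zero.2 hC.ne')
  refine ⟨fun z => z * (C : ℂ)⁻¹, by fun_prop, (mul_left_injective₀ hC').injOn, fun z hz => ?_,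
    fun z _ => ?_⟩
  · rw [norm_mul, norm_inv, Complex.norm_of_nonneg hC.le, ← div_eq_mul_inv, div_lt_one hC]
    exact hUC z hz
  · rw [((hasDerivAt_id' z).mul_const _).deriv, one_mul]
    exact hC'

theorem exists_isDiscEmbedding_surjOn {U : Set ℂ} (hU : IsOpen U) (hUc : IsSimplyConnected U)
    (hUb : Bornology.IsBounded U) : ∃ f, IsDiscEmbedding U f ∧ SurjOn f U (ball 0 1) := by
  obtain ⟨w, hw⟩ := hUc.nonempty
  obtain ⟨f₀, hf₀⟩ := exists_isDiscEmbedding_of_isBounded hUb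
  obtain ⟨F, hF, hFw, hmax⟩ :=
    hf₀.exists_norm_deriv_maximal hU hUc.isPathConnected.isConnected.isPreconnected hw
  refine ⟨F, hF, fun a ha => by_contra fun haF => ?_⟩
  obtain ⟨G, hG, hGw, hlt⟩ := hF.exists_norm_deriv_lt hU hUc hw hFw (mem_ball_zero_iff.1 ha) haF
  exact (hmax G hG hGw).not_gt hlt

/-! ### The length-area method -/

section LengthArea

lemma det_eq_re_mul_im_sub_re_mul_im (L : ℂ →L[ℝ] ℂ) :
    L.det = (L 1).re * (L Complex.I).im - (L Complex.I).re * (L 1).im := by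
  rw [ContinuousLinearMap.det, ← LinearMap.det_toMatrix Complex.basisOneI, Matrix.det_fin_two]
  simp [LinearMap.toMatrix_apply]

lemma det_restrictScalars_toSpanSingleton (a : ℂ) :
    ((ContinuousLinearMap.toSpanSingleton ℂ a).restrictScalars ℝ).det = ‖a‖ ^ 2 := by
  rw [det_eq_re_mul_im_sub_re_mul_im, ← Complex.normSq_eq_norm_sq, Complex.normSq_apply]
  simp

lemma lintegral_norm_deriv_sq_eq_volume_image {Ω : Set ℂ} (hΩ : IsOpen Ω) {f : ℂ → ℂ}
    (hf : DifferentiableOn ℂ f Ω) (hinj : InjOn f Ω) :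
    ∫⁻ z in Ω, ENNReal.ofReal (‖deriv f z‖ ^ 2) = volume (f '' Ω) := by
  have hchange := lintegral_abs_det_fderiv_eq_addHaar_image volume hΩ.measurableSet
    (fun z hz => ((hf.hasDerivAt (hΩ.mem_nhds hz)).hasFDerivAt.restrictScalars ℝ).hasFDerivWithinAt)
    hinj
  simpa only [det_restrictScalars_toSpanSingleton, abs_pow, abs_norm] using hchange

lemma lintegral_eq_lintegral_circleMap {G : ℂ → ENNReal} (hG : Measurable G) (c : ℂ) :
    ∫⁻ z, G z = ∫⁻ ρ in Ioi 0, ENNReal.ofReal ρ *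
      ∫⁻ θ in Ioo (-Real.pi) Real.pi, G (circleMap c ρ θ) := by
  have hpolar (p : ℝ × ℝ) : c + Complex.polarCoord.symm p = circleMap c p.1 p.2 := by
    rw [Complex.polarCoord_symm_apply, circleMap, Complex.exp_mul_I, Complex.ofReal_cos,
      Complex.ofReal_sin]
  have hcircle : Measurable fun p : ℝ × ℝ => circleMap c p.1 p.2 := by
    unfold circleMap
    fun_prop
  rw [← lintegral_add_left_eq_self G c, ← Complex.lintegral_comp_polarCoord_symm,
    polarCoord_target, Measure.volume_eq_prod, ← Measure.prod_restrict]
  simp only [hpolar, smul_eq_mul]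
  rw [lintegral_prod]
  · refine lintegral_congr fun ρ => ?_
    have hGρ : Measurable fun θ => G (circleMap c ρ θ) :=
      hG.comp (continuous_circleMap c ρ).measurable
    rw [← lintegral_const_mul _ hGρ]
  · exact (Measurable.mul (by fun_prop) (hG.comp hcircle)).aemeasurable

lemma lintegral_inv_Ioo_zero {R : ℝ} (hR : 0 < R) :
    ∫⁻ x in Ioo (0 : ℝ) R, ENNReal.ofReal x⁻¹ = ⊤ := by
  by_contra hfin
  have hint : IntegrableOn (fun x : ℝ => x⁻¹) (Ioo 0 R) := by
    refine ⟨measurable_inv.aestronglyMeasurable, ?_⟩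
    rw [hasFiniteIntegral_iff_norm, setLIntegral_congr_fun measurableSet_Ioo fun x hx => by
      rw [Real.norm_of_nonneg (inv_nonneg.2 hx.1.le)]]
    exact lt_top_iff_ne_top.2 hfin
  rw [← intervalIntegrable_iff_integrableOn_Ioo_of_le hR.le, intervalIntegrable_inv_iff] at hint
  exact hint.elim hR.ne fun h => h left_mem_uIcc

lemma volume_re_image_sphere_le_lintegral {Ω : Set ℂ} (hΩ : IsOpen Ω) {f : ℂ → ℂ}
    (hf : DifferentiableOn ℂ f Ω) (c : ℂ) {ρ : ℝ} (hρ : 0 ≤ ρ) :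
    volume (Complex.re '' (f '' (Ω ∩ sphere c ρ))) ≤
      ∫⁻ θ in Ioo (-Real.pi) Real.pi ∩ circleMap c ρ ⁻¹' Ω,
        ENNReal.ofReal (ρ * ‖deriv f (circleMap c ρ θ)‖) := by
  set T := Ioo (-Real.pi) Real.pi ∩ circleMap c ρ ⁻¹' Ω
  set u : ℝ → ℝ := fun θ => (f (circleMap c ρ θ)).re
  have hT : MeasurableSet T :=
    (isOpen_Ioo.inter (hΩ.preimage (continuous_circleMap c ρ))).measurableSet
  have hu : ∀ θ ∈ T, HasDerivWithinAt u
      (deriv f (circleMap c ρ θ) * (circleMap 0 ρ θ * Complex.I)).re T θ := fun θ hθ =>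
    (Complex.reCLM.hasFDerivAt.comp_hasDerivAt θ
      ((hf.hasDerivAt (hΩ.mem_nhds hθ.2)).comp θ (hasDerivAt_circleMap c ρ θ))).hasDerivWithinAt
  have hcover : Complex.re '' (f '' (Ω ∩ sphere c ρ)) ⊆ u '' T ∪ {u Real.pi} := by
    rintro _ ⟨_, ⟨z, ⟨hz, hzρ⟩, rfl⟩, rfl⟩
    have hz_arg : circleMap c ρ (z - c).arg = z := by
      rw [circleMap, ← mem_sphere_iff_norm.1 hzρ, Complex.norm_mul_exp_arg_mul_I, add_sub_cancel]
    rcases (Complex.arg_le_pi (z - c)).lt_or_eq with hlt | heq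
    · exact Or.inl ⟨(z - c).arg, ⟨⟨Complex.neg_pi_lt_arg _, hlt⟩, by rwa [mem_preimage, hz_arg]⟩,
        by simp only [u, hz_arg]⟩
    · exact Or.inr (by simp only [u, ← heq, hz_arg, mem_singleton_iff])
  calc volume (Complex.re '' (f '' (Ω ∩ sphere c ρ)))
      ≤ volume (u '' T) + volume {u Real.pi} :=
        (measure_mono hcover).trans (measure_union_le _ _)
    _ = volume (u '' T) := by rw [Real.volume_singleton, add_zero]
    _ ≤ ∫⁻ θ in T, ENNReal.ofReal
          |(deriv f (circleMap c ρ θ) * (circleMap 0 ρ θ * Complex.I)).re| := by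
        simpa using addHaar_image_le_lintegral_abs_det_fderiv volume hT
          fun θ hθ => (hu θ hθ).hasFDerivWithinAt
    _ ≤ ∫⁻ θ in T, ENNReal.ofReal (ρ * ‖deriv f (circleMap c ρ θ)‖) := by
        refine lintegral_mono fun θ => ENNReal.ofReal_le_ofReal ?_
        refine (Complex.abs_re_le_norm _).trans_eq ?_
        rw [norm_mul, norm_mul, norm_circleMap_zero, Complex.norm_I, mul_one, abs_of_nonneg hρ,
          mul_comm]

lemma volume_re_image_sphere_le_add {Ω : Set ℂ} (hΩ : IsOpen Ω) {f : ℂ → ℂ}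
    (hf : DifferentiableOn ℂ f Ω) (c : ℂ) {ρ s : ℝ} (hρ : 0 ≤ ρ) (hs : 0 < s) :
    volume (Complex.re '' (f '' (Ω ∩ sphere c ρ))) ≤ ENNReal.ofReal (Real.pi * s) +
      ENNReal.ofReal (ρ ^ 2 / (2 * s)) * ∫⁻ θ in Ioo (-Real.pi) Real.pi,
        Ω.indicator (fun z => ENNReal.ofReal (‖deriv f z‖ ^ 2)) (circleMap c ρ θ) := by
  set G : ℂ → ENNReal := Ω.indicator fun z => ENNReal.ofReal (‖deriv f z‖ ^ 2) with hG
  have hGm : Measurable G :=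
    ((measurable_deriv f).norm.pow_const 2).ennreal_ofReal.indicator hΩ.measurableSet
  have hamgm (q : ℝ) : ρ * q ≤ s / 2 + ρ ^ 2 / (2 * s) * q ^ 2 := by
    have hsq : s / 2 + ρ ^ 2 / (2 * s) * q ^ 2 - ρ * q = (s - ρ * q) ^ 2 / (2 * s) := by
      field_simp
      ring
    linarith [show 0 ≤ (s - ρ * q) ^ 2 / (2 * s) by positivity]
  calc volume (Complex.re '' (f '' (Ω ∩ sphere c ρ)))
      ≤ ∫⁻ θ in Ioo (-Real.pi) Real.pi ∩ circleMap c ρ ⁻¹' Ω,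
          ENNReal.ofReal (ρ * ‖deriv f (circleMap c ρ θ)‖) :=
        volume_re_image_sphere_le_lintegral hΩ hf c hρ
    _ ≤ ∫⁻ θ in Ioo (-Real.pi) Real.pi ∩ circleMap c ρ ⁻¹' Ω,
          (ENNReal.ofReal (s / 2) + ENNReal.ofReal (ρ ^ 2 / (2 * s)) * G (circleMap c ρ θ)) := by
        refine setLIntegral_mono' (measurableSet_Ioo.inter
          (hΩ.preimage (continuous_circleMap c ρ)).measurableSet) fun θ hθ => ?_
        rw [hG, indicator_of_mem (show circleMap c ρ θ ∈ Ω from hθ.2),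
          ← ENNReal.ofReal_mul (by positivity),
          ← ENNReal.ofReal_add (by positivity) (by positivity)]
        exact ENNReal.ofReal_le_ofReal (hamgm _)
    _ ≤ ∫⁻ θ in Ioo (-Real.pi) Real.pi,
          (ENNReal.ofReal (s / 2) + ENNReal.ofReal (ρ ^ 2 / (2 * s)) * G (circleMap c ρ θ)) :=
        lintegral_mono_set inter_subset_left
    _ = _ := by
        have hGρ : Measurable fun θ => G (circleMap c ρ θ) :=
          hGm.comp (continuous_circleMap c ρ).measurable
        rw [lintegral_add_left measurable_const, lintegral_const_mul _ hGρ,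
          setLIntegral_const, Real.volume_Ioo, ← ENNReal.ofReal_mul (by positivity)]
        congr 2
        ring

lemma ofReal_mul_inv_le_of_le_volume_re_image_sphere {Ω : Set ℂ} (hΩ : IsOpen Ω) {f : ℂ → ℂ}
    (hf : DifferentiableOn ℂ f Ω) (c : ℂ) {ρ d : ℝ} (hρ : 0 < ρ) (hd : 0 < d)
    (hle : ENNReal.ofReal d ≤ volume (Complex.re '' (f '' (Ω ∩ sphere c ρ)))) :
    ENNReal.ofReal (d ^ 2 / (2 * Real.pi)) * ENNReal.ofReal ρ⁻¹ ≤
      ENNReal.ofReal ρ * ∫⁻ θ in Ioo (-Real.pi) Real.pi,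
        Ω.indicator (fun z => ENNReal.ofReal (‖deriv f z‖ ^ 2)) (circleMap c ρ θ) := by
  set J := ∫⁻ θ in Ioo (-Real.pi) Real.pi,
    Ω.indicator (fun z => ENNReal.ofReal (‖deriv f z‖ ^ 2)) (circleMap c ρ θ)
  set s := d / (2 * Real.pi) with hs
  have hs0 : 0 < s := by positivity
  have hsplit : ENNReal.ofReal d = ENNReal.ofReal (Real.pi * s) + ENNReal.ofReal (d / 2) := by
    rw [← ENNReal.ofReal_add (by positivity) (by positivity), hs]
    congr 1
    field_simp
    ring
  have hhalf : ENNReal.ofReal (d / 2) ≤ ENNReal.ofReal (ρ ^ 2 / (2 * s)) * J := by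
    refine (ENNReal.add_le_add_iff_left (a := ENNReal.ofReal (Real.pi * s))
      ENNReal.ofReal_ne_top).1 ?_
    exact hsplit ▸ hle.trans (volume_re_image_sphere_le_add hΩ hf c hρ.le hs0)
  calc ENNReal.ofReal (d ^ 2 / (2 * Real.pi)) * ENNReal.ofReal ρ⁻¹
      = ENNReal.ofReal (2 * s * ρ⁻¹) * ENNReal.ofReal (d / 2) := by
        rw [← ENNReal.ofReal_mul (by positivity), ← ENNReal.ofReal_mul (by positivity), hs]
        congr 1
        ring
    _ ≤ ENNReal.ofReal (2 * s * ρ⁻¹) * (ENNReal.ofReal (ρ ^ 2 / (2 * s)) * J) := by gcongr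
    _ = ENNReal.ofReal ρ * J := by
        rw [← mul_assoc, ← ENNReal.ofReal_mul (by positivity)]
        congr 2
        field_simp

theorem exists_volume_re_image_sphere_lt {Ω : Set ℂ} (hΩ : IsOpen Ω) {f : ℂ → ℂ}
    (hf : DifferentiableOn ℂ f Ω) (hinj : InjOn f Ω) (harea : volume (f '' Ω) ≠ ⊤) (c : ℂ)
    {d R : ℝ} (hd : 0 < d) (hR : 0 < R) :
    ∃ ρ ∈ Ioo 0 R, volume (Complex.re '' (f '' (Ω ∩ sphere c ρ))) < ENNReal.ofReal d := by
  by_contra! hlarge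
  have hmeas : Measurable (Ω.indicator fun z => ENNReal.ofReal (‖deriv f z‖ ^ 2)) :=
    ((measurable_deriv f).norm.pow_const 2).ennreal_ofReal.indicator hΩ.measurableSet
  refine harea (top_le_iff.1 ?_)
  calc ⊤ = ∫⁻ ρ in Ioo 0 R, ENNReal.ofReal (d ^ 2 / (2 * Real.pi)) * ENNReal.ofReal ρ⁻¹ := by
        rw [lintegral_const_mul _ (by fun_prop), lintegral_inv_Ioo_zero hR, ENNReal.mul_top]
        rw [Ne, ENNReal.ofReal_eq_zero, not_le]
        positivity
    _ ≤ ∫⁻ ρ in Ioo 0 R, ENNReal.ofReal ρ * ∫⁻ θ in Ioo (-Real.pi) Real.pi,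
          Ω.indicator (fun z => ENNReal.ofReal (‖deriv f z‖ ^ 2)) (circleMap c ρ θ) :=
        setLIntegral_mono' measurableSet_Ioo fun ρ hρ =>
          ofReal_mul_inv_le_of_le_volume_re_image_sphere hΩ hf c hρ.1 hd (hlarge ρ hρ)
    _ ≤ ∫⁻ ρ in Ioi 0, ENNReal.ofReal ρ * ∫⁻ θ in Ioo (-Real.pi) Real.pi,
          Ω.indicator (fun z => ENNReal.ofReal (‖deriv f z‖ ^ 2)) (circleMap c ρ θ) :=
        lintegral_mono_set fun ρ hρ => hρ.1
    _ = volume (f '' Ω) := by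
        rw [← lintegral_eq_lintegral_circleMap hmeas, lintegral_indicator hΩ.measurableSet,
          lintegral_norm_deriv_sq_eq_volume_image hΩ hf hinj]

end LengthArea

/-- `Φ` maps the open set `Ω` conformally onto the unit disc, with inverse `ψ`. Outside `Ω` and
the unit disc the two functions are arbitrary. -/
structure IsRiemannMap (Ω : Set ℂ) (Φ ψ : ℂ → ℂ) : Prop where
  isOpen : IsOpen Ω
  differentiableOn : DifferentiableOn ℂ Φ Ω
  differentiableOn_symm : DifferentiableOn ℂ ψ (ball 0 1)
  mapsTo : MapsTo Φ Ω (ball 0 1)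
  mapsTo_symm : MapsTo ψ (ball 0 1) Ω
  leftInvOn : LeftInvOn ψ Φ Ω
  rightInvOn : RightInvOn ψ Φ (ball 0 1)
  deriv_ne_zero : ∀ z ∈ Ω, deriv Φ z ≠ 0

theorem exists_isRiemannMap {Ω : Set ℂ} (hΩ : IsOpen Ω) (hΩc : IsSimplyConnected Ω)
    (hΩb : Bornology.IsBounded Ω) : ∃ Φ ψ, IsRiemannMap Ω Φ ψ := by
  obtain ⟨Φ, hΦ, hsurj⟩ := exists_isDiscEmbedding_surjOn hΩ hΩc hΩb
  set ψ := Function.invFunOn Φ Ω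
  have hmaps : MapsTo Φ Ω (ball 0 1) := fun z hz => mem_ball_zero_iff.2 (hΦ.norm_lt_one z hz)
  have hψ : MapsTo ψ (ball 0 1) Ω := hsurj.mapsTo_invFunOn
  have hright : RightInvOn ψ Φ (ball 0 1) := hsurj.rightInvOn_invFunOn
  have hleft : LeftInvOn ψ Φ Ω := hΦ.injOn.leftInvOn_invFunOn
  refine ⟨Φ, ψ, hΩ, hΦ.differentiableOn, fun w hw => ?_, hmaps, hψ, hleft, hright,
    hΦ.deriv_ne_zero⟩
  have hstrict : HasStrictDerivAt Φ (deriv Φ (ψ w)) (ψ w) :=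
    (hΦ.differentiableOn.analyticAt (hΩ.mem_nhds (hψ hw))).hasStrictDerivAt
  have hderiv := hΦ.deriv_ne_zero _ (hψ hw)
  have hcont : ContinuousAt ψ w := fun V hV => by
    have himage : Φ '' (V ∩ Ω) ∈ 𝓝 w := by
      rw [← hright hw, ← hstrict.map_nhds_eq hderiv]
      exact image_mem_map (inter_mem hV (hΩ.mem_nhds (hψ hw)))
    rw [mem_map]
    filter_upwards [himage]
    rintro _ ⟨y, ⟨hyV, hyΩ⟩, rfl⟩
    rwa [mem_preimage, hleft hyΩ]
  exact (HasDerivAt.of_local_left_inverse hcont hstrict.hasDerivAt hderiv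
    (eventually_of_mem (isOpen_ball.mem_nhds hw) hright)).differentiableAt.differentiableWithinAt

namespace IsRiemannMap

variable {Ω : Set ℂ} {Φ ψ : ℂ → ℂ}

lemma injOn (C : IsRiemannMap Ω Φ ψ) : InjOn Φ Ω := C.leftInvOn.injOn

lemma injOn_symm (C : IsRiemannMap Ω Φ ψ) : InjOn ψ (ball 0 1) := C.rightInvOn.injOn

lemma rotate (C : IsRiemannMap Ω Φ ψ) {u : ℂ} (hu : ‖u‖ = 1) :
    IsRiemannMap Ω (fun z => u * Φ z) (fun z => ψ (u⁻¹ * z)) := by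
  have hu0 : u ≠ 0 := norm_ne_zero_iff.1 (hu ▸ one_ne_zero)
  have hmaps : MapsTo (fun z => u⁻¹ * z) (ball 0 1) (ball 0 1) := fun z hz => by
    simpa [hu] using hz
  refine ⟨C.isOpen, C.differentiableOn.const_mul u,
    C.differentiableOn_symm.comp (by fun_prop) hmaps,
    fun z hz => by simpa [hu] using C.mapsTo hz, C.mapsTo_symm.comp hmaps, fun z hz => ?_,
    fun z hz => ?_, fun z hz => ?_⟩
  · simp only [inv_mul_cancel_left₀ hu0]
    exact C.leftInvOn hz
  · simp only [C.rightInvOn (hmaps hz), mul_inv_cancel_left₀ hu0]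
  · rw [((C.differentiableOn.hasDerivAt (C.isOpen.mem_nhds hz)).const_mul u).deriv]
    exact mul_ne_zero hu0 (C.deriv_ne_zero z hz)

end IsRiemannMap

/-! ### Boundary extension of Riemann maps -/

/-- The filter `l` converges to `c` through connected subsets of `Ω`: the way in which a boundary
point of `Ω` is approached in Carathéodory's theorem. -/
def ConnectedApproach (Ω : Set ℂ) (l : Filter ℂ) (c : ℂ) : Prop :=
  ∀ ρ > 0, ∃ N ∈ l, N ⊆ Ω ∩ ball c ρ ∧ IsPreconnected N

namespace ConnectedApproach

variable {Ω : Set ℂ} {l : Filter ℂ} {c : ℂ}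

lemma eventually_mem (hl : ConnectedApproach Ω l c) : ∀ᶠ w in l, w ∈ Ω := by
  obtain ⟨N, hN, hNΩ, -⟩ := hl 1 one_pos
  exact mem_of_superset hN (hNΩ.trans inter_subset_left)

lemma le_nhds (hl : ConnectedApproach Ω l c) : l ≤ 𝓝 c :=
  nhds_basis_ball.ge_iff.2 fun ρ hρ => by
    obtain ⟨N, hN, hNΩ, -⟩ := hl ρ hρ
    exact mem_of_superset hN (hNΩ.trans inter_subset_right)

end ConnectedApproach

lemma ordConnected_cos_gt (a : ℝ) :
    OrdConnected {θ ∈ Icc (-Real.pi) Real.pi | a < Real.cos θ} := by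
  refine ⟨fun x hx y hy z hz => ⟨⟨hx.1.1.trans hz.1, hz.2.trans hy.1.2⟩, ?_⟩⟩
  have hcos {t : ℝ} (ht : |t| ≤ Real.pi) (hzt : |z| ≤ |t|) : Real.cos t ≤ Real.cos z := by
    rw [← Real.cos_abs t, ← Real.cos_abs z]
    exact Real.cos_le_cos_of_nonneg_of_le_pi (abs_nonneg z) ht hzt
  rcases le_max_iff.1 (abs_le_max_abs_abs hz.1 hz.2) with hzx | hzy
  · exact hx.2.trans_le (hcos (abs_le.2 hx.1) hzx)
  · exact hy.2.trans_le (hcos (abs_le.2 hy.1) hzy)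

lemma isPreconnected_ball_inter_sphere {ζ : ℂ} (hζ : ‖ζ‖ = 1) {r : ℝ} (hr : 0 < r) :
    IsPreconnected (ball (0 : ℂ) 1 ∩ sphere ζ r) := by
  have hζ0 : ζ ≠ 0 := norm_ne_zero_iff.1 (hζ ▸ one_ne_zero)
  set S : ℝ → ℂ := fun θ => ζ - ζ * (r * (Real.cos θ + Real.sin θ * Complex.I)) with hS
  have hnorm (θ : ℝ) : ‖S θ‖ ^ 2 = 1 - 2 * r * Real.cos θ + r ^ 2 := by
    have hfactor : S θ = ζ * ((1 - r * Real.cos θ : ℝ) + (-(r * Real.sin θ) : ℝ) * Complex.I) := by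
      push_cast [hS]
      ring
    rw [hfactor, norm_mul, hζ, one_mul, ← Complex.normSq_eq_norm_sq, Complex.normSq_add_mul_I]
    linear_combination r ^ 2 * Real.sin_sq_add_cos_sq θ
  have hmem_ball (θ : ℝ) : S θ ∈ ball (0 : ℂ) 1 ↔ r / 2 < Real.cos θ := by
    rw [mem_ball_zero_iff, ← sq_lt_one_iff₀ (norm_nonneg _), hnorm]
    constructor <;> intro h <;> nlinarith
  have hsphere (θ : ℝ) : S θ ∈ sphere ζ r := by
    rw [mem_sphere_iff_norm, hS, sub_sub_cancel_left, norm_neg, norm_mul, hζ, one_mul, norm_mul,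
      Complex.norm_add_mul_I, Real.cos_sq_add_sin_sq, Real.sqrt_one, mul_one, Complex.norm_real,
      Real.norm_of_nonneg hr.le]
  have himage : ball (0 : ℂ) 1 ∩ sphere ζ r =
      S '' {θ ∈ Icc (-Real.pi) Real.pi | r / 2 < Real.cos θ} := by
    refine Subset.antisymm (fun z hz => ?_) ?_
    · have hpolar := Complex.norm_mul_cos_add_sin_mul_I ((ζ - z) / ζ)
      rw [norm_div, hζ, div_one, ← dist_eq_norm', mem_sphere.1 hz.2] at hpolar
      have hzS : S (Complex.arg ((ζ - z) / ζ)) = z := by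
        push_cast [hS]
        rw [hpolar, mul_div_cancel₀ _ hζ0, sub_sub_cancel]
      exact ⟨_, ⟨abs_le.1 (Complex.abs_arg_le_pi _), (hmem_ball _).1 (hzS.symm ▸ hz.1)⟩, hzS⟩
    · rintro _ ⟨θ, hθ, rfl⟩
      exact ⟨(hmem_ball θ).2 hθ.2, hsphere θ⟩
  rw [himage]
  exact (ordConnected_cos_gt _).isPreconnected.image S (by fun_prop)

lemma ofReal_sub_le_volume_of_Icc_subset {S : Set ℝ} {a b : ℝ} (h : Icc a b ⊆ S) :
    ENNReal.ofReal (b - a) ≤ volume S :=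
  Real.volume_Icc ▸ measure_mono h

lemma exists_norm_eq_one_re_mul_sub_eq_dist (a b : ℂ) :
    ∃ u : ℂ, ‖u‖ = 1 ∧ (u * b).re - (u * a).re = dist a b := by
  obtain ⟨u, hu, hub⟩ := Complex.exists_norm_eq_mul_self (b - a)
  exact ⟨u, hu, by rw [← Complex.sub_re, ← mul_sub, ← hub, Complex.ofReal_re, dist_eq_norm']⟩

namespace IsRiemannMap

variable {Ω : Set ℂ} {Φ ψ : ℂ → ℂ} {l : Filter ℂ} {c ζ : ℂ}

lemma norm_eq_one_of_mapClusterPt (C : IsRiemannMap Ω Φ ψ) (hl : ConnectedApproach Ω l c)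
    (hc : c ∉ Ω) (hζ : MapClusterPt ζ l Φ) : ‖ζ‖ = 1 := by
  have hle : ζ ∈ closedBall (0 : ℂ) 1 := isClosed_closedBall.mem_of_mapClusterPt hζ
    (hl.eventually_mem.mono fun w hw => ball_subset_closedBall (C.mapsTo hw))
  refine (mem_closedBall_zero_iff.1 hle).eq_of_not_lt fun hlt => hc ?_
  have hζb : ζ ∈ ball (0 : ℂ) 1 := mem_ball_zero_iff.2 hlt
  have hcluster : MapClusterPt (ψ ζ) l (ψ ∘ Φ) :=
    hζ.continuousAt_comp (C.differentiableOn_symm.continuousOn.continuousAt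
      (isOpen_ball.mem_nhds hζb))
  have htendsto : Tendsto (ψ ∘ Φ) l (𝓝 c) :=
    Tendsto.congr' (hl.eventually_mem.mono fun w hw => (C.leftInvOn hw).symm) hl.le_nhds
  have hψζ : ψ ζ = c := by
    by_contra hne
    obtain ⟨U, V, hU, hV, hUV⟩ := t2_separation_nhds hne
    obtain ⟨w, hwU, hwV⟩ := ((hcluster.frequently hU).and_eventually (htendsto hV)).exists
    exact disjoint_left.1 hUV hwU hwV
  exact hψζ ▸ C.mapsTo_symm hζb

lemma ofReal_mem_ball {t₁ t₂ t : ℝ} (ht₁ : -1 < t₁) (ht₂ : t₂ < 1) (ht : t ∈ Icc t₁ t₂) :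
    (t : ℂ) ∈ ball (0 : ℂ) 1 := by
  rw [mem_ball_zero_iff, Complex.norm_real, Real.norm_eq_abs, abs_lt]
  exact ⟨ht₁.trans_le ht.1, ht.2.trans_lt ht₂⟩

lemma exists_pos_le_dist_symm_ofReal (C : IsRiemannMap Ω Φ ψ) (hc : c ∉ Ω) {t₁ t₂ : ℝ}
    (ht₁ : -1 < t₁) (ht : t₁ ≤ t₂) (ht₂ : t₂ < 1) :
    ∃ ρ > 0, ∀ t ∈ Icc t₁ t₂, ρ ≤ dist (ψ t) c := by
  have hmaps : MapsTo (fun t : ℝ => (t : ℂ)) (Icc t₁ t₂) (ball 0 1) := fun t =>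
    ofReal_mem_ball ht₁ ht₂
  have hcont : ContinuousOn (fun t : ℝ => dist (ψ t) c) (Icc t₁ t₂) :=
    (continuous_id.dist continuous_const).comp_continuousOn
      (C.differentiableOn_symm.continuousOn.comp (by fun_prop) hmaps)
  obtain ⟨t₀, ht₀, hmin⟩ := isCompact_Icc.exists_isMinOn (nonempty_Icc.2 ht) hcont
  have hpos : 0 < dist (ψ t₀) c := dist_pos.2 fun h => hc (h ▸ C.mapsTo_symm (hmaps ht₀))
  exact ⟨_, hpos, fun t ht => hmin ht⟩

/- Every vertical line with abscissa in `Icc t₁ t₂` meets `Φ '' N`; between that point and the real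
axis it crosses the image of the circle. -/
lemma Icc_subset_re_image_sphere (C : IsRiemannMap Ω Φ ψ) {t₁ t₂ ρ : ℝ} (ht₁ : -1 < t₁)
    (ht₂ : t₂ < 1) (hfar : ∀ t ∈ Icc t₁ t₂, ρ ≤ dist (ψ t) c) {N : Set ℂ}
    (hNΩ : N ⊆ Ω ∩ ball c ρ) (hN : IsPreconnected N) {w₁ w₂ : ℂ} (hw₁ : w₁ ∈ N) (hw₂ : w₂ ∈ N)
    (hre₁ : (Φ w₁).re ≤ t₁) (hre₂ : t₂ ≤ (Φ w₂).re) :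
    Icc t₁ t₂ ⊆ Complex.re '' (Φ '' (Ω ∩ sphere c ρ)) := by
  intro t ht
  obtain ⟨w, hw, hwt⟩ : ∃ w ∈ N, (Φ w).re = t :=
    hN.intermediate_value hw₁ hw₂ (f := fun w => (Φ w).re)
      (Complex.continuous_re.comp_continuousOn
        (C.differentiableOn.continuousOn.mono fun w hw => (hNΩ hw).1))
      ⟨hre₁.trans ht.1, ht.2.trans hre₂⟩
  obtain ⟨hwΩ, hwc⟩ := hNΩ hw
  have hseg : segment ℝ (Φ w) t ⊆ ball (0 : ℂ) 1 :=
    (convex_ball 0 1).segment_subset (C.mapsTo hwΩ) (ofReal_mem_ball ht₁ ht₂ ht)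
  have hnear : dist (ψ (Φ w)) c ≤ ρ := (C.leftInvOn hwΩ).symm ▸ (mem_ball.1 hwc).le
  obtain ⟨y, hy, hyρ⟩ : ∃ y ∈ segment ℝ (Φ w) (t : ℂ), dist (ψ y) c = ρ :=
    (convex_segment _ _).isPreconnected.intermediate_value (left_mem_segment ℝ _ _)
      (right_mem_segment ℝ _ _)
      ((continuous_id.dist continuous_const).comp_continuousOn
        (C.differentiableOn_symm.continuousOn.mono hseg))
      ⟨hnear, hfar t ht⟩
  refine ⟨y, ⟨ψ y, ⟨C.mapsTo_symm (hseg hy), hyρ⟩, C.rightInvOn (hseg hy)⟩, ?_⟩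
  obtain ⟨a, b, -, -, hab, rfl⟩ := hy
  simp only [Complex.add_re, Complex.real_smul, Complex.re_ofReal_mul, Complex.ofReal_re, hwt]
  rw [← add_mul, hab, one_mul]

lemma re_le_re_of_mapClusterPt (C : IsRiemannMap Ω Φ ψ) (hl : ConnectedApproach Ω l c)
    (hc : c ∉ Ω) {ζ₁ ζ₂ : ℂ} (h₁ : MapClusterPt ζ₁ l Φ) (h₂ : MapClusterPt ζ₂ l Φ) :
    ζ₂.re ≤ ζ₁.re := by
  by_contra! hlt
  obtain ⟨t₁, hζt₁, ht₁ζ⟩ := exists_between hlt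
  obtain ⟨t₂, ht, ht₂ζ⟩ := exists_between ht₁ζ
  have ht₁ : -1 < t₁ := by
    have hre := Complex.abs_re_le_norm ζ₁
    rw [C.norm_eq_one_of_mapClusterPt hl hc h₁] at hre
    exact (abs_le.1 hre).1.trans_lt hζt₁
  have ht₂ : t₂ < 1 := by
    have hre := Complex.abs_re_le_norm ζ₂
    rw [C.norm_eq_one_of_mapClusterPt hl hc h₂] at hre
    exact ht₂ζ.trans_le (abs_le.1 hre).2
  obtain ⟨ρ₀, hρ₀, hfar⟩ := C.exists_pos_le_dist_symm_ofReal hc ht₁ ht.le ht₂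
  obtain ⟨ρ, hρ, hvol⟩ := exists_volume_re_image_sphere_lt C.isOpen C.differentiableOn C.injOn
    (isBounded_ball.subset C.mapsTo.image_subset).measure_lt_top.ne c (sub_pos.2 ht) hρ₀
  obtain ⟨N, hN, hNΩ, hNc⟩ := hl ρ hρ.1
  obtain ⟨w₁, hw₁, hw₁N⟩ := ((h₁.frequently
    (Complex.continuous_re.continuousAt.eventually_lt_const hζt₁)).and_eventually hN).exists
  obtain ⟨w₂, hw₂, hw₂N⟩ := ((h₂.frequently
    (Complex.continuous_re.continuousAt.eventually_const_lt ht₂ζ)).and_eventually hN).exists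
  exact hvol.not_ge (ofReal_sub_le_volume_of_Icc_subset (C.Icc_subset_re_image_sphere ht₁ ht₂
    (fun t ht => hρ.2.le.trans (hfar t ht)) hNΩ hNc hw₁N hw₂N hw₁.le hw₂.le))

lemma exists_tendsto_of_connectedApproach (C : IsRiemannMap Ω Φ ψ) [l.NeBot]
    (hl : ConnectedApproach Ω l c) (hc : c ∉ Ω) : ∃ ζ, ‖ζ‖ = 1 ∧ Tendsto Φ l (𝓝 ζ) := by
  have hball : ∀ᶠ w in l, Φ w ∈ closedBall (0 : ℂ) 1 :=
    hl.eventually_mem.mono fun w hw => ball_subset_closedBall (C.mapsTo hw)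
  obtain ⟨ζ, -, hζ⟩ :=
    (isCompact_closedBall (0 : ℂ) 1).exists_mapClusterPt_of_frequently hball.frequently
  refine ⟨ζ, C.norm_eq_one_of_mapClusterPt hl hc hζ,
    (isCompact_closedBall (0 : ℂ) 1).tendsto_nhds_of_unique_mapClusterPt hball
      fun ζ' _ hζ' => ?_⟩
  obtain ⟨u, hu, hdist⟩ := exists_norm_eq_one_re_mul_sub_eq_dist ζ ζ'
  have hcontinuous (x : ℂ) : ContinuousAt (fun z => u * z) x := by fun_prop
  have hre : (u * ζ').re ≤ (u * ζ).re := (C.rotate hu).re_le_re_of_mapClusterPt hl hc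
    (hζ.continuousAt_comp (hcontinuous ζ)) (hζ'.continuousAt_comp (hcontinuous ζ'))
  exact (dist_le_zero.1 (by linarith)).symm

lemma exists_symm_mem_ball_of_tendsto (C : IsRiemannMap Ω Φ ψ) [l.NeBot]
    (hl : ConnectedApproach Ω l c) (hζ : ‖ζ‖ = 1) (ht : Tendsto Φ l (𝓝 ζ)) {δ : ℝ} (hδ : 0 < δ) :
    ∃ R > 0, ∀ r ∈ Ioo 0 R, ∃ y ∈ ball (0 : ℂ) 1 ∩ sphere ζ r, ψ y ∈ ball c δ := by
  obtain ⟨N, hN, hNΩ, hNc⟩ := hl δ hδ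
  obtain ⟨w₀, hw₀⟩ := Filter.nonempty_of_mem hN
  refine ⟨dist (Φ w₀) ζ, dist_pos.2 fun h => ?_, fun r hr => ?_⟩
  · have hlt := mem_ball_zero_iff.1 (C.mapsTo (hNΩ hw₀).1)
    rw [h, hζ] at hlt
    exact lt_irrefl _ hlt
  · obtain ⟨w₁, hw₁, hw₁N⟩ := ((Metric.tendsto_nhds.1 ht r hr.1).and hN).exists
    obtain ⟨w, hw, hwr⟩ := hNc.intermediate_value hw₁N hw₀ (f := fun w => dist (Φ w) ζ)
      ((continuous_id.dist continuous_const).comp_continuousOn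
        (C.differentiableOn.continuousOn.mono fun w hw => (hNΩ hw).1))
      ⟨hw₁.le, hr.2.le⟩
    refine ⟨Φ w, ⟨C.mapsTo (hNΩ hw).1, hwr⟩, ?_⟩
    rw [C.leftInvOn (hNΩ hw).1]
    exact (hNΩ hw).2

/- Short arcs of the disc around `ζ` would have images joining the neighbourhoods of `c₁` and
`c₂`. -/
lemma eq_of_tendsto_of_connectedApproach (C : IsRiemannMap Ω Φ ψ) (hΩ : Bornology.IsBounded Ω)
    {l₁ l₂ : Filter ℂ} [l₁.NeBot] [l₂.NeBot] {c₁ c₂ : ℂ} (hl₁ : ConnectedApproach Ω l₁ c₁)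
    (hl₂ : ConnectedApproach Ω l₂ c₂) (hζ : ‖ζ‖ = 1) (ht₁ : Tendsto Φ l₁ (𝓝 ζ))
    (ht₂ : Tendsto Φ l₂ (𝓝 ζ)) : c₁ = c₂ := by
  by_contra hne
  have hδ : 0 < dist c₁ c₂ / 3 := div_pos (dist_pos.2 hne) three_pos
  obtain ⟨u, hu, hdist⟩ := exists_norm_eq_one_re_mul_sub_eq_dist c₁ c₂
  have hu0 : u ≠ 0 := norm_ne_zero_iff.1 (hu ▸ one_ne_zero)
  obtain ⟨R₁, hR₁, hnear₁⟩ := C.exists_symm_mem_ball_of_tendsto hl₁ hζ ht₁ hδ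
  obtain ⟨R₂, hR₂, hnear₂⟩ := C.exists_symm_mem_ball_of_tendsto hl₂ hζ ht₂ hδ
  have hbounded : Bornology.IsBounded ((fun z => u * ψ z) '' ball 0 1) := by
    refine (hΩ.smul₀ u).subset ?_
    rintro _ ⟨z, hz, rfl⟩
    exact smul_mem_smul_set (C.mapsTo_symm hz)
  obtain ⟨r, hr, hvol⟩ := exists_volume_re_image_sphere_lt isOpen_ball
    (C.differentiableOn_symm.const_mul u)
    (fun a ha b hb h => C.injOn_symm ha hb (mul_left_cancel₀ hu0 h)) hbounded.measure_lt_top.ne ζ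
    hδ (lt_min hR₁ hR₂)
  obtain ⟨y₁, hy₁, hd₁⟩ := hnear₁ r ⟨hr.1, hr.2.trans_le (min_le_left _ _)⟩
  obtain ⟨y₂, hy₂, hd₂⟩ := hnear₂ r ⟨hr.1, hr.2.trans_le (min_le_right _ _)⟩
  have hre {y c : ℂ} (hy : ψ y ∈ ball c (dist c₁ c₂ / 3)) :
      |(u * ψ y).re - (u * c).re| < dist c₁ c₂ / 3 := by
    rw [← Complex.sub_re, ← mul_sub]
    refine (Complex.abs_re_le_norm _).trans_lt ?_
    rwa [norm_mul, hu, one_mul, ← mem_ball_iff_norm]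
  have hIcc : Icc (u * ψ y₁).re (u * ψ y₂).re ⊆
      Complex.re '' ((fun z => u * ψ z) '' (ball 0 1 ∩ sphere ζ r)) := by
    rw [image_image]
    exact (isPreconnected_ball_inter_sphere hζ hr.1).intermediate_value hy₁ hy₂
      (Complex.continuous_re.comp_continuousOn
        ((C.differentiableOn_symm.const_mul u).continuousOn.mono inter_subset_left))
  refine hvol.not_ge ((ENNReal.ofReal_le_ofReal ?_).trans (ofReal_sub_le_volume_of_Icc_subset hIcc))
  linarith [abs_lt.1 (hre hd₁), abs_lt.1 (hre hd₂)]

end IsRiemannMap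

lemma image_eq_closedBall_of_ball_subset {X E : Type*} [TopologicalSpace X]
    [NormedAddCommGroup E] [NormedSpace ℝ E] {f : X → E} {K : Set X} {c : E} {r : ℝ}
    (hK : IsCompact K) (hr : r ≠ 0) (hf : ContinuousOn f K) (hmaps : MapsTo f K (closedBall c r))
    (hball : ball c r ⊆ f '' K) : f '' K = closedBall c r :=
  hmaps.image_subset.antisymm <| closure_ball c hr ▸
    closure_minimal hball (hK.image_of_continuousOn hf).isClosed

section Convex

variable {Q : Set ℂ} {h Φ ψ : ℂ → ℂ} {p : ℂ}

lemma connectedApproach_map_nhdsWithin (hQ : Convex ℝ Q) (hc : ContinuousOn h Q) (hp : p ∈ Q) :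
    ConnectedApproach (h '' interior Q) (map h (𝓝[interior Q] p)) (h p) := by
  intro ρ hρ
  obtain ⟨ε, hε, hball⟩ := Metric.continuousWithinAt_iff.1 (hc p hp) ρ hρ
  refine ⟨h '' (interior Q ∩ ball p ε),
    image_mem_map (inter_mem_nhdsWithin _ (ball_mem_nhds p hε)), ?_,
    (hQ.interior.inter (convex_ball p ε)).isPreconnected.image h
      (hc.mono (inter_subset_left.trans interior_subset))⟩
  rintro _ ⟨z, ⟨hz, hzp⟩, rfl⟩
  exact ⟨mem_image_of_mem h hz, hball (interior_subset hz) hzp⟩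

lemma notMem_image_interior (hi : InjOn h Q) (hp : p ∈ Q \ interior Q) :
    h p ∉ h '' interior Q := by
  rintro ⟨z, hz, hzp⟩
  exact hp.2 (hi (interior_subset hz) hp.1 hzp ▸ hz)

lemma subset_closure_interior (hQ : Convex ℝ Q) (hQi : (interior Q).Nonempty) :
    Q ⊆ closure (interior Q) := by
  rw [hQ.closure_interior_eq_closure_of_nonempty_interior hQi]
  exact subset_closure

lemma isSimplyConnected_image_interior (hQc : IsCompact Q) (hQ : Convex ℝ Q)
    (hQi : (interior Q).Nonempty) (hc : ContinuousOn h Q) (hi : InjOn h Q) :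
    IsSimplyConnected (h '' interior Q) := by
  have : CompactSpace Q := isCompact_iff_compactSpace.1 hQc
  have hrestrict := continuousOn_iff_continuous_domRestrict.1 hc
  have hemb : IsEmbedding (Q.domRestrict h ∘ inclusion (interior_subset (s := Q))) :=
    (hrestrict.isClosedEmbedding (injOn_iff_injective.1 hi)).isEmbedding.comp
      (IsEmbedding.inclusion _)
  have hrange : range (Q.domRestrict h ∘ inclusion (interior_subset (s := Q))) =
      h '' interior Q := by
    ext y
    simp [inclusion]
  have : ContractibleSpace (interior Q) := hQ.interior.contractibleSpace hQi
  have hhomeo := hemb.toHomeomorph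
  rw [hrange] at hhomeo
  have : ContractibleSpace (h '' interior Q) := hhomeo.symm.contractibleSpace
  change SimplyConnectedSpace _
  infer_instance

/-- The conformal map `Φ` of `h '' interior Q` onto the unit disc, precomposed with `h`, extends to
a homeomorphism `Ψ` of `Q` onto the closed disc. -/
structure IsCaratheodoryExtension (Q : Set ℂ) (h Φ Ψ : ℂ → ℂ) : Prop where
  differentiableOn : DifferentiableOn ℂ Φ (h '' interior Q)
  deriv_ne_zero : ∀ w ∈ h '' interior Q, deriv Φ w ≠ 0
  eq_comp : ∀ z ∈ interior Q, Ψ z = Φ (h z)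
  continuousOn : ContinuousOn Ψ Q
  injOn : InjOn Ψ Q
  image_eq : Ψ '' Q = closedBall 0 1
  norm_lt_one : ∀ z ∈ interior Q, ‖Ψ z‖ < 1
  norm_eq_one : ∀ z ∈ Q \ interior Q, ‖Ψ z‖ = 1

lemma exists_tendsto_comp_nhdsWithin_interior (hQ : Convex ℝ Q) (hQi : (interior Q).Nonempty)
    (hc : ContinuousOn h Q) (hi : InjOn h Q) (C : IsRiemannMap (h '' interior Q) Φ ψ)
    (hp : p ∈ Q \ interior Q) :
    ∃ ζ, ‖ζ‖ = 1 ∧ Tendsto (Φ ∘ h) (𝓝[interior Q] p) (𝓝 ζ) := by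
  have : (𝓝[interior Q] p).NeBot :=
    mem_closure_iff_nhdsWithin_neBot.1 (subset_closure_interior hQ hQi hp.1)
  exact C.exists_tendsto_of_connectedApproach (connectedApproach_map_nhdsWithin hQ hc hp.1)
    (notMem_image_interior hi hp)

lemma eq_of_tendsto_comp_nhdsWithin_interior (hQ : Convex ℝ Q) (hQi : (interior Q).Nonempty)
    (hΩ : Bornology.IsBounded (h '' interior Q)) (hc : ContinuousOn h Q) (hi : InjOn h Q)
    (C : IsRiemannMap (h '' interior Q) Φ ψ) {q ζ : ℂ} (hp : p ∈ Q) (hq : q ∈ Q) (hζ : ‖ζ‖ = 1)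
    (hpζ : Tendsto (Φ ∘ h) (𝓝[interior Q] p) (𝓝 ζ))
    (hqζ : Tendsto (Φ ∘ h) (𝓝[interior Q] q) (𝓝 ζ)) : p = q := by
  have : (𝓝[interior Q] p).NeBot :=
    mem_closure_iff_nhdsWithin_neBot.1 (subset_closure_interior hQ hQi hp)
  have : (𝓝[interior Q] q).NeBot :=
    mem_closure_iff_nhdsWithin_neBot.1 (subset_closure_interior hQ hQi hq)
  exact hi hp hq (C.eq_of_tendsto_of_connectedApproach hΩ
    (connectedApproach_map_nhdsWithin hQ hc hp) (connectedApproach_map_nhdsWithin hQ hc hq) hζ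
    hpζ hqζ)

theorem exists_isCaratheodoryExtension (hQc : IsCompact Q) (hQ : Convex ℝ Q)
    (hQi : (interior Q).Nonempty) (hc : ContinuousOn h Q) (hi : InjOn h Q)
    (hΩ : IsOpen (h '' interior Q)) : ∃ Φ Ψ, IsCaratheodoryExtension Q h Φ Ψ := by
  have hbounded : Bornology.IsBounded (h '' interior Q) :=
    (hQc.image_of_continuousOn hc).isBounded.subset (image_mono interior_subset)
  obtain ⟨Φ, ψ, C⟩ :=
    exists_isRiemannMap hΩ (isSimplyConnected_image_interior hQc hQ hQi hc hi) hbounded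
  have hcl := subset_closure_interior hQ hQi
  have hcont : ContinuousOn (Φ ∘ h) (interior Q) :=
    C.differentiableOn.continuousOn.comp (hc.mono interior_subset) (mapsTo_image h _)
  set Ψ := extendFrom (interior Q) (Φ ∘ h) with hΨ
  have hin : ∀ z ∈ interior Q, Ψ z = Φ (h z) := fun z hz =>
    extendFrom_eq (subset_closure hz) (hcont z hz)
  have hbdry : ∀ p ∈ Q \ interior Q,
      ‖Ψ p‖ = 1 ∧ Tendsto (Φ ∘ h) (𝓝[interior Q] p) (𝓝 (Ψ p)) := fun p hp => by
    obtain ⟨ζ, hζ, ht⟩ := exists_tendsto_comp_nhdsWithin_interior hQ hQi hc hi C hp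
    rw [hΨ, extendFrom_eq (hcl hp.1) ht]
    exact ⟨hζ, ht⟩
  have hlt : ∀ z ∈ interior Q, ‖Ψ z‖ < 1 := fun z hz => by
    rw [hin z hz]
    exact mem_ball_zero_iff.1 (C.mapsTo (mem_image_of_mem h hz))
  have hΨc : ContinuousOn Ψ Q := continuousOn_extendFrom hcl fun p hp => by
    by_cases hpi : p ∈ interior Q
    · exact ⟨_, hcont p hpi⟩
    · exact ⟨_, (hbdry p ⟨hp, hpi⟩).2⟩
  refine ⟨Φ, Ψ, C.differentiableOn, C.deriv_ne_zero, hin, hΨc, fun a ha b hb hab => ?_, ?_, hlt,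
    fun p hp => (hbdry p hp).1⟩
  · by_cases hai : a ∈ interior Q <;> by_cases hbi : b ∈ interior Q
    · rw [hin a hai, hin b hbi] at hab
      exact hi ha hb (C.injOn (mem_image_of_mem h hai) (mem_image_of_mem h hbi) hab)
    · exact absurd (hab ▸ (hbdry b ⟨hb, hbi⟩).1) (hlt a hai).ne
    · exact absurd (hab ▸ (hbdry a ⟨ha, hai⟩).1) (hlt b hbi).ne
    · exact eq_of_tendsto_comp_nhdsWithin_interior hQ hQi hbounded hc hi C ha hb
        (hbdry a ⟨ha, hai⟩).1 (hbdry a ⟨ha, hai⟩).2 (hab ▸ (hbdry b ⟨hb, hbi⟩).2)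
  · refine image_eq_closedBall_of_ball_subset hQc one_ne_zero hΨc (fun z hz => ?_) fun y hy => ?_
    · rw [mem_closedBall_zero_iff]
      by_cases hzi : z ∈ interior Q
      · exact (hlt z hzi).le
      · exact (hbdry z ⟨hz, hzi⟩).1.le
    · obtain ⟨z, hz, hzy⟩ := C.mapsTo_symm hy
      exact ⟨z, interior_subset hz, by rw [hin z hz, hzy, C.rightInvOn hy]⟩

end Convex

/-! ### Flat boundary points -/

section Flat

variable {X Y : Type*} [TopologicalSpace X] [TopologicalSpace Y]

/-- `A` is flat at `x` if some chart around `x` carries `A` to the closed lower half plane. This is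
the local model of a boundary point of a subsurface, or of an interior point, as the chart need not
send `x` to the real axis. -/
def FlatAt (A : Set X) (x : X) : Prop :=
  ∃ e : OpenPartialHomeomorph X ℂ, x ∈ e.source ∧ ∀ y ∈ e.source, (y ∈ A ↔ (e y).im ≤ 0)

lemma FlatAt.congr {A B : Set X} {x : X} (h : FlatAt A x)
    (hAB : ∀ᶠ y in 𝓝 x, (y ∈ A ↔ y ∈ B)) : FlatAt B x := by
  obtain ⟨e, hx, he⟩ := h
  obtain ⟨U, hU, hUo, hxU⟩ := eventually_nhds_iff.1 hAB
  refine ⟨e.restrOpen U hUo, by simp [hx, hxU], fun y hy => ?_⟩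
  rw [e.restrOpen_source] at hy
  rw [← hU y hy.2]
  exact he y hy.1

lemma FlatAt.of_chart {A : Set X} {A' : Set Y} {x : X} (c : OpenPartialHomeomorph X Y)
    (hx : x ∈ c.source) (h : FlatAt A' (c x)) (hA : ∀ y ∈ c.source, (y ∈ A ↔ c y ∈ A')) :
    FlatAt A x := by
  obtain ⟨e, hxe, he⟩ := h
  refine ⟨c.trans e, by simp [hx, hxe], fun y hy => ?_⟩
  rw [c.trans_source] at hy
  rw [hA y hy.1, he _ hy.2, c.coe_trans, Function.comp_apply]

lemma eq_of_mem_frontier_of_eventually_mem_iff_le {B : Set X} {p : X} {f : X → ℝ} {c : ℝ}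
    (hf : ContinuousAt f p) (hB : ∀ᶠ y in 𝓝 p, (y ∈ B ↔ f y ≤ c)) (hp : p ∈ frontier B) :
    f p = c := by
  refine le_antisymm (not_lt.1 fun hgt => ?_) (not_lt.1 fun hlt => hp.2 ?_)
  · obtain ⟨y, ⟨hy, hyc⟩, hyB⟩ := mem_closure_iff_nhds.1 hp.1 _
      (inter_mem hB (hf.eventually_const_lt hgt))
    exact (hy.1 hyB).not_gt hyc
  · rw [mem_interior_iff_mem_nhds]
    filter_upwards [hB, hf.eventually_lt_const hlt] with y hy hyc
    exact hy.2 hyc.le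

end Flat

/-- The Jacobian determinant of a pair of real functions on the plane, in terms of their
differentials. Its nonvanishing expresses that the level sets of the functions are transverse. -/
noncomputable def jacobian (u' v' : ℂ →L[ℝ] ℝ) : ℝ :=
  u' 1 * v' Complex.I - u' Complex.I * v' 1

lemma det_equivRealProdCLM_symm_comp_prod (u' v' : ℂ →L[ℝ] ℝ) :
    (Complex.equivRealProdCLM.symm.toContinuousLinearMap.comp (u'.prod v')).det =
      jacobian u' v' := by
  simp [det_eq_re_mul_im_sub_re_mul_im, jacobian]

lemma exists_chart_of_jacobian_ne_zero {u v : ℂ → ℝ} {u' v' : ℂ →L[ℝ] ℝ} {w : ℂ}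
    (hu : HasStrictFDerivAt u u' w) (hv : HasStrictFDerivAt v v' w) (hd : jacobian u' v' ≠ 0) :
    ∃ e : OpenPartialHomeomorph ℂ ℂ, w ∈ e.source ∧ ∀ y, (e y).re = u y ∧ (e y).im = v y := by
  rw [← det_equivRealProdCLM_symm_comp_prod] at hd
  have hstrict := Complex.equivRealProdCLM.symm.toContinuousLinearMap.hasStrictFDerivAt.comp w
    (hu.prodMk hv)
  rw [← ContinuousLinearMap.coe_toContinuousLinearEquivOfDetNeZero _ hd] at hstrict
  exact ⟨hstrict.toOpenPartialHomeomorph _, hstrict.mem_toOpenPartialHomeomorph_source,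
    fun y => by simp⟩

/-- The plane homeomorphism opening the corner `re ≤ 0 ∨ im ≤ 0` up to the half plane `im ≤ 0`. -/
noncomputable def cornerHomeomorph : ℂ ≃ₜ ℂ where
  toFun z := Complex.equivRealProdCLM.symm (z.re - z.im, min z.re z.im)
  invFun w := Complex.equivRealProdCLM.symm (w.im + max w.re 0, w.im + max (-w.re) 0)
  left_inv z := by
    apply Complex.ext <;> rcases le_total z.re z.im with h | h <;> simp [h]
  right_inv w := by
    apply Complex.ext <;> rcases le_total w.re 0 with h | h <;> simp [h]
  continuous_toFun := by fun_prop
  continuous_invFun := by fun_prop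

lemma cornerHomeomorph_im (z : ℂ) : (cornerHomeomorph z).im = min z.re z.im := by
  simp [cornerHomeomorph]

lemma flatAt_corner {u v : ℂ → ℝ} {u' v' : ℂ →L[ℝ] ℝ} {w : ℂ} (hu : HasStrictFDerivAt u u' w)
    (hv : HasStrictFDerivAt v v' w) (hd : jacobian u' v' ≠ 0) :
    FlatAt {z | u z ≤ 0 ∨ v z ≤ 0} w := by
  obtain ⟨e, hw, he⟩ := exists_chart_of_jacobian_ne_zero hu hv hd
  refine ⟨e.transHomeomorph cornerHomeomorph, hw, fun y _ => ?_⟩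
  rw [e.transHomeomorph_apply, Function.comp_apply, cornerHomeomorph_im, (he y).1, (he y).2,
    min_le_iff, mem_ofPred_eq]

lemma exists_jacobian_ne_zero {v' : ℂ →L[ℝ] ℝ} (hv' : v' ≠ 0) :
    ∃ u' : ℂ →L[ℝ] ℝ, jacobian u' v' ≠ 0 := by
  refine ⟨v' Complex.I • Complex.reCLM - v' 1 • Complex.imCLM, fun hzero => hv' ?_⟩
  have hsum : v' Complex.I ^ 2 + v' 1 ^ 2 = 0 := by
    simpa [jacobian, sq] using hzero
  have hI : v' Complex.I = 0 := by nlinarith [sq_nonneg (v' 1), sq_nonneg (v' Complex.I)]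
  have hone : v' 1 = 0 := by nlinarith [sq_nonneg (v' 1), sq_nonneg (v' Complex.I)]
  ext z
  rw [show z = z.re • (1 : ℂ) + z.im • Complex.I by simp, map_add, map_smul, map_smul, hI, hone]
  simp

lemma flatAt_of_hasStrictFDerivAt {v : ℂ → ℝ} {v' : ℂ →L[ℝ] ℝ} {w : ℂ}
    (hv : HasStrictFDerivAt v v' w) (hv' : v' ≠ 0) : FlatAt {z | v z ≤ 0} w := by
  obtain ⟨u', hu'⟩ := exists_jacobian_ne_zero hv'
  obtain ⟨e, hw, he⟩ := exists_chart_of_jacobian_ne_zero u'.hasStrictFDerivAt hv hu'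
  exact ⟨e, hw, fun y _ => by rw [(he y).2, mem_ofPred_eq]⟩

section CompactEmbedding

variable {X Y : Type*} [TopologicalSpace X] [TopologicalSpace Y] [T2Space Y] {K : Set X}
  {F : X → Y}

lemma continuousOn_invFunOn_image [Nonempty X] (hK : IsCompact K) (hc : ContinuousOn F K)
    (hi : InjOn F K) : ContinuousOn (Function.invFunOn F K) (F '' K) := by
  rw [continuousOn_iff_isClosed]
  intro t ht
  refine ⟨F '' (K ∩ t), ((hK.inter_right ht).image_of_continuousOn
    (hc.mono inter_subset_left)).isClosed, ?_⟩
  rw [inter_comm K t, hi.leftInvOn_invFunOn.image_inter', inter_assoc, inter_self]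

lemma exists_chart_of_isCompact (hK : IsCompact K) (hc : ContinuousOn F K) (hi : InjOn F K)
    {x : X} (hx : x ∈ interior K) (hF : F '' K ∈ 𝓝 (F x)) :
    ∃ G : OpenPartialHomeomorph X Y, x ∈ G.source ∧ G.source ⊆ interior K ∧ ⇑G = F := by
  have : Nonempty X := ⟨x⟩
  have hleft : LeftInvOn (Function.invFunOn F K) F (interior K) :=
    hi.leftInvOn_invFunOn.mono interior_subset
  have hright : RightInvOn (Function.invFunOn F K) F (interior (F '' K)) :=
    (surjOn_image F K).rightInvOn_invFunOn.mono interior_subset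
  have hcont := hc.mono interior_subset
  have hcont_inv := (continuousOn_invFunOn_image hK hc hi).mono interior_subset
  refine ⟨{ toFun := F
            invFun := Function.invFunOn F K
            source := interior K ∩ F ⁻¹' interior (F '' K)
            target := interior (F '' K) ∩ Function.invFunOn F K ⁻¹' interior K
            map_source' := fun z hz => ⟨hz.2, ?_⟩
            map_target' := fun y hy => ⟨hy.2, ?_⟩
            left_inv' := fun z hz => hleft hz.1
            right_inv' := fun y hy => hright hy.1
            open_source := hcont.isOpen_inter_preimage isOpen_interior isOpen_interior
            open_target := hcont_inv.isOpen_inter_preimage isOpen_interior isOpen_interior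
            continuousOn_toFun := hcont.mono inter_subset_left
            continuousOn_invFun := hcont_inv.mono inter_subset_left },
    ⟨hx, mem_interior_iff_mem_nhds.2 hF⟩, inter_subset_left, rfl⟩
  · rw [mem_preimage, hleft hz.1]
    exact hz.1
  · rw [mem_preimage, hright hy.1]
    exact hy.1

end CompactEmbedding

/-! ### Conformal boundary charts -/

/-- The closed upper half disc of radius `a` about `c`, which is meant to be a real point. -/
def halfDisc (c : ℂ) (a : ℝ) : Set ℂ :=
  closedBall c a ∩ {z | 0 ≤ z.im}

lemma isCompact_halfDisc (c : ℂ) (a : ℝ) : IsCompact (halfDisc c a) :=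
  (isCompact_closedBall c a).inter_right (isClosed_le continuous_const Complex.continuous_im)

lemma convex_halfDisc (c : ℂ) (a : ℝ) : Convex ℝ (halfDisc c a) :=
  (convex_closedBall c a).inter (convex_halfSpace_im_ge 0)

lemma interior_halfDisc (c : ℂ) {a : ℝ} (ha : 0 < a) :
    interior (halfDisc c a) = ball c a ∩ {z | 0 < z.im} := by
  rw [halfDisc, interior_inter, interior_closedBall _ ha.ne', Complex.interior_setOfPred_le_im]

lemma interior_halfDisc_nonempty {c : ℂ} (hc : c.im = 0) {a : ℝ} (ha : 0 < a) :
    (interior (halfDisc c a)).Nonempty := by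
  rw [interior_halfDisc c ha]
  refine ⟨c + (a / 2 : ℝ) * Complex.I, ?_, by simp [hc, ha]⟩
  rw [mem_ball, dist_self_add_left, norm_mul, Complex.norm_I, mul_one, Complex.norm_real,
    Real.norm_eq_abs, abs_of_pos (half_pos ha)]
  exact half_lt_self ha

/-- The nearest point retraction of the plane onto the closed upper half plane. -/
noncomputable def upperRetraction (z : ℂ) : ℂ :=
  Complex.equivRealProdCLM.symm (z.re, max z.im 0)

lemma upperRetraction_re (z : ℂ) : (upperRetraction z).re = z.re := by
  simp [upperRetraction]

lemma upperRetraction_im (z : ℂ) : (upperRetraction z).im = max z.im 0 := by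
  simp [upperRetraction]

lemma upperRetraction_of_im_nonneg {z : ℂ} (hz : 0 ≤ z.im) : upperRetraction z = z :=
  Complex.ext (upperRetraction_re z) (by rw [upperRetraction_im, max_eq_left hz])

lemma continuous_upperRetraction : Continuous upperRetraction := by
  unfold upperRetraction
  fun_prop

lemma upperRetraction_mem_halfDisc {c z : ℂ} {a : ℝ} (hc : c.im = 0) (hz : z ∈ closedBall c a) :
    upperRetraction z ∈ halfDisc c a := by
  refine ⟨?_, show 0 ≤ (upperRetraction z).im from upperRetraction_im z ▸ le_max_right _ _⟩
  rw [mem_closedBall, Complex.dist_eq_re_im] at hz ⊢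
  refine (Real.sqrt_le_sqrt ?_).trans hz
  rw [upperRetraction_re, upperRetraction_im, hc, sub_zero, sub_zero]
  gcongr (z.re - c.re) ^ 2 + ?_
  rw [sq_le_sq, abs_of_nonneg (le_max_right _ _)]
  exact max_le (le_abs_self _) (abs_nonneg _)

/-- The extension of a map `Ψ` of the upper half plane that attaches a radial collar: the point
at depth `t` below a real point `x` is sent to `(1 + t) Ψ(x)`. -/
noncomputable def collarExtension (Ψ : ℂ → ℂ) (z : ℂ) : ℂ :=
  (1 + max (-z.im) 0) • Ψ (upperRetraction z)

lemma collarExtension_of_im_nonneg (Ψ : ℂ → ℂ) {z : ℂ} (hz : 0 ≤ z.im) :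
    collarExtension Ψ z = Ψ z := by
  rw [collarExtension, upperRetraction_of_im_nonneg hz, max_eq_right (neg_nonpos.2 hz), add_zero,
    one_smul]

lemma collarExtension_sub_mul_I (Ψ : ℂ → ℂ) {q : ℂ} (hq : q.im = 0) {t : ℝ} (ht : 0 ≤ t) :
    collarExtension Ψ (q - t * Complex.I) = (1 + t) • Ψ q := by
  have him : (q - t * Complex.I).im = -t := by simp [hq]
  have hretract : upperRetraction (q - t * Complex.I) = q :=
    Complex.ext (by simp [upperRetraction_re])
      (by rw [upperRetraction_im, him, hq, max_eq_right (neg_nonpos.2 ht)])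
  rw [collarExtension, hretract, him, neg_neg, max_eq_left ht]

namespace IsCaratheodoryExtension

variable {h Φ Ψ : ℂ → ℂ} {c : ℂ} {a : ℝ}

lemma norm_le_one {Q : Set ℂ} (hΨ : IsCaratheodoryExtension Q h Φ Ψ) {z : ℂ} (hz : z ∈ Q) :
    ‖Ψ z‖ ≤ 1 :=
  mem_closedBall_zero_iff.1 (hΨ.image_eq ▸ mem_image_of_mem Ψ hz)

lemma norm_upperRetraction_eq_one (hΨ : IsCaratheodoryExtension (halfDisc c a) h Φ Ψ)
    (hc : c.im = 0) (ha : 0 < a) {z : ℂ} (hz : z ∈ closedBall c a)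
    (hz0 : z.im ≤ 0) : ‖Ψ (upperRetraction z)‖ = 1 := by
  refine hΨ.norm_eq_one _ ⟨upperRetraction_mem_halfDisc hc hz, fun hint => ?_⟩
  have him : 0 < (upperRetraction z).im := (interior_halfDisc c ha ▸ hint).2
  rw [upperRetraction_im, max_eq_right hz0] at him
  exact lt_irrefl _ him

lemma norm_collarExtension_of_im_nonpos (hΨ : IsCaratheodoryExtension (halfDisc c a) h Φ Ψ)
    (hc : c.im = 0) (ha : 0 < a) {z : ℂ}
    (hz : z ∈ closedBall c a) (hz0 : z.im ≤ 0) : ‖collarExtension Ψ z‖ = 1 - z.im := by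
  rw [collarExtension, norm_smul, hΨ.norm_upperRetraction_eq_one hc ha hz hz0, mul_one,
    max_eq_left (neg_nonneg.2 hz0), Real.norm_of_nonneg (by linarith), sub_eq_add_neg]

lemma one_le_norm_collarExtension_iff (hΨ : IsCaratheodoryExtension (halfDisc c a) h Φ Ψ)
    (hc : c.im = 0) (ha : 0 < a) {z : ℂ} (hz : z ∈ ball c a) :
    1 ≤ ‖collarExtension Ψ z‖ ↔ z.im ≤ 0 := by
  refine ⟨fun hnorm => not_lt.1 fun hpos => hnorm.not_gt ?_, fun hneg => ?_⟩
  · rw [collarExtension_of_im_nonneg Ψ hpos.le]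
    exact hΨ.norm_lt_one z (interior_halfDisc c ha ▸ ⟨hz, hpos⟩)
  · rw [hΨ.norm_collarExtension_of_im_nonpos hc ha (ball_subset_closedBall hz) hneg]
    linarith

lemma continuousOn_collarExtension (hΨ : IsCaratheodoryExtension (halfDisc c a) h Φ Ψ)
    (hc : c.im = 0) :
    ContinuousOn (collarExtension Ψ) (closedBall c a) := by
  have hscale : Continuous fun z : ℂ => 1 + max (-z.im) 0 := by fun_prop
  exact hscale.continuousOn.smul <| hΨ.continuousOn.comp continuous_upperRetraction.continuousOn
    fun z hz => upperRetraction_mem_halfDisc hc hz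

lemma injOn_collarExtension (hΨ : IsCaratheodoryExtension (halfDisc c a) h Φ Ψ)
    (hc : c.im = 0) (ha : 0 < a) :
    InjOn (collarExtension Ψ) (closedBall c a) := by
  intro z hz w hw heq
  wlog hzw : z.im ≤ w.im generalizing z w
  · exact (this hw hz heq.symm (le_of_not_ge hzw)).symm
  rcases le_total w.im 0 with hw0 | hw0
  · have him : z.im = w.im := by
      have hnorm := congrArg norm heq
      rw [hΨ.norm_collarExtension_of_im_nonpos hc ha hz (hzw.trans hw0),
        hΨ.norm_collarExtension_of_im_nonpos hc ha hw hw0] at hnorm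
      exact sub_right_injective hnorm
    have hfactor : (1 + max (-w.im) 0) ≠ 0 := by positivity
    have hretract := hΨ.injOn (upperRetraction_mem_halfDisc hc hz)
      (upperRetraction_mem_halfDisc hc hw)
      (smul_right_injective ℂ hfactor (by simpa only [collarExtension, him] using heq))
    refine Complex.ext ?_ him
    rw [← upperRetraction_re z, hretract, upperRetraction_re]
  · have hz0 : 0 ≤ z.im := by
      by_contra! hneg
      have hnorm := hΨ.norm_le_one ⟨hw, hw0⟩
      rw [← collarExtension_of_im_nonneg Ψ hw0, ← heq,
        hΨ.norm_collarExtension_of_im_nonpos hc ha hz hneg.le] at hnorm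
      linarith
    rw [collarExtension_of_im_nonneg Ψ hz0, collarExtension_of_im_nonneg Ψ hw0] at heq
    exact hΨ.injOn ⟨hz, hz0⟩ ⟨hw, hw0⟩ heq

lemma center_norm_eq_one (hΨ : IsCaratheodoryExtension (halfDisc c a) h Φ Ψ)
    (hc : c.im = 0) (ha : 0 < a) : ‖Ψ c‖ = 1 := by
  simpa [upperRetraction_of_im_nonneg hc.ge] using
    hΨ.norm_upperRetraction_eq_one hc ha (mem_closedBall_self ha.le) hc.le

lemma eventually_exists_real_eq_normalize (hΨ : IsCaratheodoryExtension (halfDisc c a) h Φ Ψ)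
    (hc : c.im = 0) (ha : 0 < a) :
    ∀ᶠ w in 𝓝 (Ψ c), ∃ q ∈ ball c (a / 2), q.im = 0 ∧ Ψ q = ‖w‖⁻¹ • w := by
  have hnorm := hΨ.center_norm_eq_one hc ha
  have hfar : IsCompact (Ψ '' (halfDisc c a \ ball c (a / 2))) :=
    ((isCompact_halfDisc c a).diff isOpen_ball).image_of_continuousOn
      (hΨ.continuousOn.mono sdiff_subset)
  have hcenter : Ψ c ∉ Ψ '' (halfDisc c a \ ball c (a / 2)) := by
    rintro ⟨q, ⟨hq, hqc⟩, heq⟩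
    rw [hΨ.injOn hq ⟨mem_closedBall_self ha.le, hc.ge⟩ heq] at hqc
    exact hqc (mem_ball_self (half_pos ha))
  have hne : ‖Ψ c‖ ≠ 0 := hnorm ▸ one_ne_zero
  have hcont : ContinuousAt (fun w : ℂ => ‖w‖⁻¹ • w) (Ψ c) := by
    fun_prop (disch := assumption)
  have hnear := hcont.eventually_mem (s := (Ψ '' (halfDisc c a \ ball c (a / 2)))ᶜ)
    (by simpa [hnorm] using hfar.isClosed.isOpen_compl.mem_nhds hcenter)
  filter_upwards [hnear, continuous_norm.continuousAt.eventually_ne hne] with w hw hw0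
  have hunit : ‖‖w‖⁻¹ • w‖ = 1 := by
    rw [norm_smul, norm_inv, norm_norm, inv_mul_cancel₀ hw0]
  obtain ⟨q, hq, hqw⟩ : ‖w‖⁻¹ • w ∈ Ψ '' halfDisc c a := by
    rw [hΨ.image_eq, mem_closedBall_zero_iff, hunit]
  have hqball : q ∈ ball c (a / 2) := by
    by_contra hqfar
    exact hw ⟨q, ⟨hq, hqfar⟩, hqw⟩
  refine ⟨q, hqball, le_antisymm (not_lt.1 fun hpos => ?_) hq.2, hqw⟩
  have hlt := hΨ.norm_lt_one q
    (interior_halfDisc c ha ▸ ⟨ball_subset_ball (half_le_self ha.le) hqball, hpos⟩)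
  rw [hqw, hunit] at hlt
  exact lt_irrefl _ hlt

lemma image_collarExtension_mem_nhds (hΨ : IsCaratheodoryExtension (halfDisc c a) h Φ Ψ)
    (hc : c.im = 0) (ha : 0 < a) :
    collarExtension Ψ '' closedBall c a ∈ 𝓝 (collarExtension Ψ c) := by
  rw [collarExtension_of_im_nonneg Ψ hc.ge]
  have hnorm : ∀ᶠ w in 𝓝 (Ψ c), ‖w‖ < 1 + a / 2 :=
    continuous_norm.continuousAt.eventually_lt_const
      (by simp only [hΨ.center_norm_eq_one hc ha]; linarith)
  filter_upwards [hΨ.eventually_exists_real_eq_normalize hc ha, hnorm] with w hreal hw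
  rcases le_total ‖w‖ 1 with hw1 | hw1
  · obtain ⟨q, hq, rfl⟩ : w ∈ Ψ '' halfDisc c a := by
      rwa [hΨ.image_eq, mem_closedBall_zero_iff]
    exact ⟨q, hq.1, collarExtension_of_im_nonneg Ψ hq.2⟩
  · obtain ⟨q, hqball, hq0, hqw⟩ := hreal
    have hdepth := sub_nonneg.2 hw1
    refine ⟨q - (‖w‖ - 1 : ℝ) * Complex.I, ?_, ?_⟩
    · have hdist : dist (q - (‖w‖ - 1 : ℝ) * Complex.I) q = ‖w‖ - 1 := by
        rw [dist_eq_norm, sub_sub_cancel_left, norm_neg, norm_mul, Complex.norm_I, mul_one,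
          Complex.norm_real, Real.norm_of_nonneg hdepth]
      rw [mem_closedBall]
      linarith [dist_triangle (q - (‖w‖ - 1 : ℝ) * Complex.I) q c, mem_ball.1 hqball]
    · rw [collarExtension_sub_mul_I Ψ hq0 hdepth, hqw, smul_smul, add_sub_cancel,
        mul_inv_cancel₀ (by linarith), one_smul]

end IsCaratheodoryExtension

/-- `G` is a chart of the plane in which `B` is the exterior of the open unit disc, and which is
conformal off `B`. -/
structure IsConformalBoundaryChart (G : OpenPartialHomeomorph ℂ ℂ) (B : Set ℂ) : Prop where
  mem_iff : ∀ y ∈ G.source, (y ∈ B ↔ 1 ≤ ‖G y‖)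
  differentiableOn : DifferentiableOn ℂ G (G.source \ B)
  deriv_ne_zero : ∀ y ∈ G.source \ B, deriv G y ≠ 0

lemma IsConformalBoundaryChart.norm_eq_one {G : OpenPartialHomeomorph ℂ ℂ} {B : Set ℂ}
    (hG : IsConformalBoundaryChart G B) {x : ℂ} (hx : x ∈ frontier B) (hxG : x ∈ G.source) :
    ‖G x‖ = 1 := by
  refine neg_injective (eq_of_mem_frontier_of_eventually_mem_iff_le
    (f := fun y => -‖G y‖) (G.continuousAt hxG).norm.neg ?_ hx)
  filter_upwards [G.open_source.mem_nhds hxG] with y hy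
  rw [hG.mem_iff y hy, neg_le_neg_iff]

lemma isConformalBoundaryChart_of_eqOn {G : OpenPartialHomeomorph ℂ ℂ} {B : Set ℂ}
    (hB : IsClosed B) (hmem : ∀ y ∈ G.source, (y ∈ B ↔ 1 ≤ ‖G y‖)) {Φ : ℂ → ℂ} {Ω : Set ℂ}
    (hΦ : DifferentiableOn ℂ Φ Ω) (hΦ' : ∀ z ∈ Ω, deriv Φ z ≠ 0)
    (hsub : G.source \ B ⊆ Ω) (heq : EqOn G Φ (G.source \ B)) :
    IsConformalBoundaryChart G B where
  mem_iff := hmem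
  differentiableOn := (hΦ.mono hsub).congr heq
  deriv_ne_zero y hy := by
    rw [(heq.eventuallyEq_of_mem ((G.open_source.sdiff hB).mem_nhds hy)).deriv_eq]
    exact hΦ' y (hsub hy)

theorem exists_isConformalBoundaryChart {B : Set ℂ} (hB : IsClosed B) {p : ℂ} (hflat : FlatAt B p)
    (hp : p ∈ frontier B) :
    ∃ G : OpenPartialHomeomorph ℂ ℂ, p ∈ G.source ∧ IsConformalBoundaryChart G B := by
  obtain ⟨e, hpe, he⟩ := hflat
  have hc : (e p).im = 0 := eq_of_mem_frontier_of_eventually_mem_iff_le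
    (f := fun y => (e y).im) (Complex.continuous_im.continuousAt.comp (e.continuousAt hpe))
    (eventually_of_mem (e.open_source.mem_nhds hpe) he) hp
  obtain ⟨a, ha, hat⟩ := nhds_basis_closedBall.mem_iff.1
    (e.open_target.mem_nhds (e.map_source hpe))
  have htarget : halfDisc (e p) a ⊆ e.target := inter_subset_left.trans hat
  have hΩ : IsOpen (e.symm '' interior (halfDisc (e p) a)) :=
    e.symm.isOpen_image_of_subset_source isOpen_interior (interior_subset.trans htarget)
  obtain ⟨Φ, Ψ, hΨ⟩ := exists_isCaratheodoryExtension (isCompact_halfDisc (e p) a)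
    (convex_halfDisc (e p) a) (interior_halfDisc_nonempty hc ha)
    (e.continuousOn_symm.mono htarget) (e.symm.injOn.mono htarget) hΩ
  obtain ⟨F, hpF, hFball, hF⟩ := exists_chart_of_isCompact (isCompact_closedBall (e p) a)
    (hΨ.continuousOn_collarExtension hc) (hΨ.injOn_collarExtension hc ha)
    (by rw [interior_closedBall _ ha.ne']; exact mem_ball_self ha)
    (hΨ.image_collarExtension_mem_nhds hc ha)
  rw [interior_closedBall _ ha.ne'] at hFball
  have hval (y : ℂ) : (e.trans F) y = collarExtension Ψ (e y) := by
    rw [e.coe_trans, Function.comp_apply, hF]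
  have hsource {y : ℂ} (hy : y ∈ (e.trans F).source) : y ∈ e.source ∧ e y ∈ ball (e p) a := by
    rw [e.trans_source] at hy
    exact ⟨hy.1, hFball hy.2⟩
  have hupper : ∀ y ∈ (e.trans F).source \ B, e y ∈ interior (halfDisc (e p) a) := fun y hy => by
    rw [interior_halfDisc _ ha]
    exact ⟨(hsource hy.1).2, not_le.1 fun hneg => hy.2 ((he y (hsource hy.1).1).2 hneg)⟩
  refine ⟨e.trans F, by simp [hpe, hpF], isConformalBoundaryChart_of_eqOn hB (fun y hy => ?_)
    hΨ.differentiableOn hΨ.deriv_ne_zero (fun y hy => ?_) (fun y hy => ?_)⟩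
  · rw [he y (hsource hy).1, hval, hΨ.one_le_norm_collarExtension_iff hc ha (hsource hy).2]
  · exact ⟨e y, hupper y hy, e.left_inv (hsource hy.1).1⟩
  · rw [hval, collarExtension_of_im_nonneg Ψ (interior_subset (hupper y hy)).2,
      hΨ.eq_comp _ (hupper y hy), e.left_inv (hsource hy.1).1]

/-! ### Generic levels -/

section Generic

variable {ι : Type*} [Fintype ι]

lemma ae_linearMap_apply_notMem {F : Type*} [NormedAddCommGroup F] [NormedSpace ℝ F]
    [FiniteDimensional ℝ F] [MeasurableSpace F] [BorelSpace F] (ν : Measure F)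
    [ν.IsAddHaarMeasure] {L : (ι → ℝ) →ₗ[ℝ] F} (hL : Function.Surjective L) {N : Set F}
    (hN : ν N = 0) : ∀ᵐ c : ι → ℝ, L c ∉ N := by
  have hmeas : ∀ᵐ c : ι → ℝ, L c ∈ (toMeasurable ν N)ᶜ := by
    rw [ae_comp_linearMap_mem_iff L _ ν hL (measurableSet_toMeasurable ν N).compl, ae_iff]
    simpa using hN
  filter_upwards [hmeas] with c hc hcN
  exact hc (subset_toMeasurable ν N hcN)

lemma addHaar_image_eq_zero_of_hasFDerivAt_prod {E G : Type*} [NormedAddCommGroup E]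
    [NormedSpace ℝ E] [FiniteDimensional ℝ E] [NormedAddCommGroup G] [NormedSpace ℝ G]
    [FiniteDimensional ℝ G] [Nontrivial G] [MeasurableSpace (E × G)] [BorelSpace (E × G)]
    (μ : Measure (E × G)) [μ.IsAddHaarMeasure] {f : E → E × G} {f' : E → E →L[ℝ] E × G}
    {s : Set E} (hf : ∀ x ∈ s, HasFDerivAt f (f' x) x) : μ (f '' s) = 0 := by
  have himage : f '' s = (f ∘ Prod.fst) '' (s ×ˢ (univ : Set G)) := by
    rw [image_comp, fst_image_prod _ univ_nonempty]
  rw [himage]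
  refine addHaar_image_eq_zero_of_det_fderivWithin_eq_zero μ
    (fun x hx => ((hf x.1 hx.1).comp x hasFDerivAt_fst).hasFDerivWithinAt) fun x _ => ?_
  obtain ⟨v, hv⟩ := exists_ne (0 : G)
  by_contra hdet
  have hinj := (LinearMap.equivOfDetNeZero _ hdet).injective (a₁ := ((0 : E), v)) (a₂ := 0)
    (by simp)
  exact hv (congrArg Prod.snd hinj)

lemma ae_jacobian_ne_zero {i j : ι} (hij : i ≠ j) {T : Set ℂ} {u v : ℂ → ℝ}
    {u' v' : ℂ → ℂ →L[ℝ] ℝ} (hu : ∀ x ∈ T, HasFDerivAt u (u' x) x)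
    (hv : ∀ x ∈ T, HasFDerivAt v (v' x) x) :
    ∀ᵐ c : ι → ℝ, ∀ x ∈ T, u x = c i → v x = c j → jacobian (u' x) (v' x) ≠ 0 := by
  classical
  have hsard : volume ((fun z => Complex.equivRealProdCLM.symm (u z, v z)) ''
      {x ∈ T | jacobian (u' x) (v' x) = 0}) = 0 :=
    addHaar_image_eq_zero_of_det_fderivWithin_eq_zero volume
      (fun x hx => (Complex.equivRealProdCLM.symm.toContinuousLinearMap.hasFDerivAt.comp x
        ((hu x hx.1).prodMk (hv x hx.1))).hasFDerivWithinAt)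
      (fun x hx => (det_equivRealProdCLM_symm_comp_prod _ _).trans hx.2)
  have hsurj : Function.Surjective (Complex.equivRealProdCLM.symm.toLinearMap ∘ₗ
      ((LinearMap.proj i : (ι → ℝ) →ₗ[ℝ] ℝ).prod (LinearMap.proj j))) := fun z =>
    ⟨fun k => if k = i then z.re else z.im, by apply Complex.ext <;> simp [hij.symm]⟩
  filter_upwards [ae_linearMap_apply_notMem volume hsurj hsard] with c hc x hx hxi hxj hjac
  exact hc ⟨x, ⟨hx, hjac⟩, by simp [hxi, hxj]⟩

lemma ae_not_three_levels {i j k : ι} (hij : i ≠ j) (hik : i ≠ k) (hjk : j ≠ k) {T : Set ℂ}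
    {u v w : ℂ → ℝ} {u' v' w' : ℂ → ℂ →L[ℝ] ℝ} (hu : ∀ x ∈ T, HasFDerivAt u (u' x) x)
    (hv : ∀ x ∈ T, HasFDerivAt v (v' x) x) (hw : ∀ x ∈ T, HasFDerivAt w (w' x) x) :
    ∀ᵐ c : ι → ℝ, ∀ x ∈ T, u x = c i → v x = c j → w x ≠ c k := by
  classical
  have hnull : ((volume : Measure ℂ).prod (volume : Measure ℝ))
      ((fun z => (Complex.equivRealProdCLM.symm (u z, v z), w z)) '' T) = 0 :=
    addHaar_image_eq_zero_of_hasFDerivAt_prod _ fun x hx =>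
      (Complex.equivRealProdCLM.symm.toContinuousLinearMap.hasFDerivAt.comp x
        ((hu x hx).prodMk (hv x hx))).prodMk (hw x hx)
  have hsurj : Function.Surjective ((Complex.equivRealProdCLM.symm.toLinearMap ∘ₗ
      ((LinearMap.proj i : (ι → ℝ) →ₗ[ℝ] ℝ).prod (LinearMap.proj j))).prod
      (LinearMap.proj k)) := fun z =>
    ⟨fun l => if l = i then z.1.re else if l = j then z.1.im else z.2,
      Prod.ext (by apply Complex.ext <;> simp [hij.symm]) (by simp [hik.symm, hjk.symm])⟩
  filter_upwards [ae_linearMap_apply_notMem _ hsurj hnull] with c hc x hx hxi hxj hxk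
  exact hc ⟨x, hx, by simp [hxi, hxj, hxk]⟩

lemma ae_not_two_levels_of_countable {i j : ι} (hij : i ≠ j) {X : Type*} [TopologicalSpace X]
    {T : Set X} (hT : IsCompact T) {u v : X → ℝ} (hu : ContinuousOn u T) (hv : ContinuousOn v T)
    (hcount : ∀ c, {x ∈ T | u x = c}.Countable) :
    ∀ᵐ c : ι → ℝ, ∀ x ∈ T, u x = c i → v x ≠ c j := by
  classical
  have hnull :
      ((volume : Measure ℝ).prod (volume : Measure ℝ)) ((fun x => (u x, v x)) '' T) = 0 := by
    rw [Measure.measure_prod_null (hT.image_of_continuousOn (hu.prodMk hv)).measurableSet]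
    refine Eventually.of_forall fun c => measure_mono_null ?_
      (((hcount c).image v).measure_zero volume)
    rintro y ⟨x, hx, hxy⟩
    rw [Prod.mk.injEq] at hxy
    exact ⟨x, ⟨hx, hxy.1⟩, hxy.2⟩
  have hsurj : Function.Surjective
      ((LinearMap.proj i : (ι → ℝ) →ₗ[ℝ] ℝ).prod (LinearMap.proj j)) := fun z =>
    ⟨fun k => if k = i then z.1 else z.2, by apply Prod.ext <;> simp [hij.symm]⟩
  filter_upwards [ae_linearMap_apply_notMem _ hsurj hnull] with c hc x hx hxi hxj
  exact hc ⟨x, hx, by simp [hxi, hxj]⟩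

lemma exists_forall_mem_Ioo_of_ae {P : (ι → ℝ) → Prop} (hP : ∀ᵐ c : ι → ℝ, P c)
    {a b : ι → ℝ} (hab : ∀ i, a i < b i) : ∃ c, P c ∧ ∀ i, c i ∈ Ioo (a i) (b i) := by
  obtain ⟨c, hbox, hc⟩ := (Measure.dense_of_ae hP).inter_open_nonempty
    (univ.pi fun i => Ioo (a i) (b i)) (isOpen_set_pi finite_univ fun i _ => isOpen_Ioo)
    (univ_pi_nonempty_iff.2 fun i => nonempty_Ioo.2 (hab i))
  exact ⟨c, hc, fun i => hbox i (mem_univ i)⟩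

end Generic

/-! ### Disc charts -/

section Union

variable {X ι : Type*} [TopologicalSpace X] [Finite ι] {B : Set X} {N : ι → Set X}

lemma eventually_mem_iUnion_iff (hN : ∀ i, IsClosed (N i)) (x : X) :
    ∀ᶠ y in 𝓝 x, (y ∈ ⋃ i, N i ↔ ∃ i, x ∈ N i ∧ y ∈ N i) := by
  have hlocal : ∀ᶠ y in 𝓝 x, ∀ i, y ∈ N i → x ∈ N i := by
    rw [eventually_all]
    intro i
    by_cases hi : x ∈ N i
    · exact Eventually.of_forall fun _ _ => hi
    · filter_upwards [(hN i).isOpen_compl.mem_nhds hi] with y hy hyN using absurd hyN hy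
  filter_upwards [hlocal] with y hy
  exact mem_iUnion.trans (exists_congr fun i => ⟨fun hi => ⟨hy i hi, hi⟩, And.right⟩)

lemma flatAt_union_iUnion_of_mem (hN : ∀ i, IsClosed (N i)) {x : X} (hx : FlatAt B x)
    (hflat : ∀ i, x ∈ N i → FlatAt (B ∪ N i) x) (hsub : {i | x ∈ N i}.Subsingleton) :
    FlatAt (B ∪ ⋃ i, N i) x := by
  by_cases hex : ∃ i, x ∈ N i
  · obtain ⟨i, hi⟩ := hex
    refine (hflat i hi).congr ?_
    filter_upwards [eventually_mem_iUnion_iff hN x] with y hy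
    rw [mem_union, mem_union, hy]
    refine or_congr_right ⟨fun hyi => ⟨i, hi, hyi⟩, ?_⟩
    rintro ⟨j, hj, hyj⟩
    exact hsub hj hi ▸ hyj
  · refine hx.congr ?_
    filter_upwards [eventually_mem_iUnion_iff hN x] with y hy
    rw [mem_union, hy, or_iff_left fun ⟨i, hi, _⟩ => hex ⟨i, hi⟩]

lemma flatAt_of_mem_frontier_union_iUnion (hB : IsClosed B) (hN : ∀ i, IsClosed (N i))
    (hin : ∀ x ∈ frontier B, (∀ i, x ∉ interior (N i)) → FlatAt (B ∪ ⋃ i, N i) x)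
    (hout : ∀ x ∈ (⋃ i, N i) \ B, (∀ i, x ∉ interior (N i)) → FlatAt (⋃ i, N i) x) {x : X}
    (hx : x ∈ frontier (B ∪ ⋃ i, N i)) : FlatAt (B ∪ ⋃ i, N i) x := by
  have hint (i : ι) : x ∉ interior (N i) := fun hi =>
    hx.2 (interior_mono ((subset_iUnion N i).trans subset_union_right) hi)
  have hmem : x ∈ B ∪ ⋃ i, N i := (hB.union (isClosed_iUnion_of_finite hN)).frontier_subset hx
  by_cases hxB : x ∈ B
  · refine hin x ?_ hint
    rw [hB.frontier_eq]
    exact ⟨hxB, fun hi => hx.2 (interior_mono subset_union_left hi)⟩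
  · refine (hout x ⟨hmem.resolve_left hxB, hxB⟩ hint).congr ?_
    filter_upwards [hB.isOpen_compl.mem_nhds hxB] with y hy
    rw [mem_union, or_iff_right hy]

end Union

lemma re_mul_im_sub_im_mul_re_ne_zero {ζ w : ℂ} (hζ : ‖ζ‖ = 1) (hw : ‖w‖ = 1) (hne : w ≠ ζ)
    (hlt : ‖w - ζ‖ < 2) : w.re * ζ.im - w.im * ζ.re ≠ 0 := by
  have hsq (z : ℂ) : ‖z‖ ^ 2 = z.re ^ 2 + z.im ^ 2 := by
    rw [Complex.sq_norm, Complex.normSq_apply, sq, sq]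
  have hζsq := hsq ζ
  have hwsq := hsq w
  have hdist := hsq (w - ζ)
  rw [hζ] at hζsq
  rw [hw] at hwsq
  rw [Complex.sub_re, Complex.sub_im] at hdist
  intro hzero
  have hpos : 0 < ‖w - ζ‖ := norm_pos_iff.2 (sub_ne_zero.2 hne)
  have hdot : ‖w - ζ‖ ^ 2 = 2 - 2 * (w.re * ζ.re + w.im * ζ.im) := by
    linear_combination hdist - hwsq - hζsq
  have hdotsq : (w.re * ζ.re + w.im * ζ.im) ^ 2 = 1 := by
    linear_combination (-(w.re * ζ.im - w.im * ζ.re)) * hzero - hζsq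
      - (ζ.re ^ 2 + ζ.im ^ 2) * hwsq
  have hprod : ‖w - ζ‖ ^ 2 * (4 - ‖w - ζ‖ ^ 2) = 0 := by
    rw [hdot]
    linear_combination (-4) * hdotsq
  rcases mul_eq_zero.1 hprod with h | h <;> nlinarith

lemma flatAt_exterior_union_disc {ζ w : ℂ} {s : ℝ} (hζ : ‖ζ‖ = 1) (hs0 : 0 < s) (hs : s < 4)
    (hw : ‖w‖ = 1) (hws : ‖w - ζ‖ ^ 2 = s) : FlatAt {z : ℂ | 1 ≤ ‖z‖ ∨ ‖z - ζ‖ ^ 2 ≤ s} w := by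
  have hexterior : HasStrictFDerivAt (fun z : ℂ => 1 - ‖z‖ ^ 2) (-(2 • innerSL ℝ w)) w :=
    (hasStrictFDerivAt_norm_sq w).const_sub 1
  have hdisc : HasStrictFDerivAt (fun z : ℂ => ‖z - ζ‖ ^ 2 - s) (2 • innerSL ℝ (w - ζ)) w :=
    ((hasStrictFDerivAt_norm_sq (w - ζ)).comp w
      ((hasStrictFDerivAt_id (𝕜 := ℝ) w).sub_const ζ)).sub_const s
  refine (flatAt_corner hexterior hdisc ?_).congr (Eventually.of_forall fun y => ?_)
  · have hcross := re_mul_im_sub_im_mul_re_ne_zero hζ hw (sub_ne_zero.1 (norm_ne_zero_iff.1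
      fun h => by simp [← hws, h] at hs0)) (by nlinarith [norm_nonneg (w - ζ)])
    have hjac : jacobian (-(2 • innerSL ℝ w)) (2 • innerSL ℝ (w - ζ)) =
        4 * (w.re * ζ.im - w.im * ζ.re) := by
      simp [jacobian, Complex.inner]
      ring
    rw [hjac]
    exact mul_ne_zero four_ne_zero hcross
  · rw [mem_ofPred_eq, mem_ofPred_eq, sub_nonpos, sub_nonpos, one_le_sq_iff₀ (norm_nonneg y)]

lemma finite_setOf_norm_eq_one_norm_sub_sq_eq {ζ : ℂ} (hζ : ζ ≠ 0) (s : ℝ) :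
    {w : ℂ | ‖w‖ = 1 ∧ ‖w - ζ‖ ^ 2 = s}.Finite := by
  /- Such `w` are roots of a nonzero quadratic polynomial, since `conj w = w⁻¹`. -/
  set p : Polynomial ℂ := Polynomial.C (conj ζ) * Polynomial.X ^ 2
    - Polynomial.C ((1 + ‖ζ‖ ^ 2 - s : ℝ) : ℂ) * Polynomial.X + Polynomial.C ζ with hp
  have hp0 : p ≠ 0 := fun h => hζ (by simpa [hp] using congrArg (Polynomial.eval 0) h)
  refine (Polynomial.finite_setOfPred_isRoot hp0).subset ?_
  rintro w ⟨hw, hws⟩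
  have hwconj : w * conj w = 1 := by
    rw [Complex.mul_conj, Complex.normSq_eq_norm_sq, hw]
    simp
  have hsub : (w - ζ) * conj (w - ζ) = s := by
    rw [Complex.mul_conj, Complex.normSq_eq_norm_sq, hws]
  have hζconj : ζ * conj ζ = ((‖ζ‖ ^ 2 : ℝ) : ℂ) := by
    rw [Complex.mul_conj, Complex.normSq_eq_norm_sq]
  simp only [mem_ofPred_eq, Polynomial.IsRoot.def, hp, Polynomial.eval_add, Polynomial.eval_sub,
    Polynomial.eval_mul, Polynomial.eval_C, Polynomial.eval_pow, Polynomial.eval_X]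
  rw [map_sub] at hsub
  push_cast at hζconj ⊢
  linear_combination (-ζ) * hwconj - w * hsub + w * hwconj + w * hζconj

/-- A chart of the plane whose target contains a round closed disc and which is conformal off `B`.
The preimages of the concentric discs serve to enlarge `B`. -/
structure DiscChart (B : Set ℂ) where
  chart : OpenPartialHomeomorph ℂ ℂ
  center : ℂ
  radius : ℝ
  radius_pos : 0 < radius
  closedBall_subset_target : closedBall center radius ⊆ chart.target
  differentiableOn : DifferentiableOn ℂ chart (chart.source \ B)
  deriv_ne_zero : ∀ y ∈ chart.source \ B, deriv chart y ≠ 0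

namespace DiscChart

variable {B : Set ℂ} (b : DiscChart B) {c : ℝ}

/-- The squared distance to the center of the disc, in the chart. -/
noncomputable def sqDist (x : ℂ) : ℝ :=
  ‖b.chart x - b.center‖ ^ 2

/-- The preimage in the chart of the concentric closed disc of squared radius `c`. -/
def disc (c : ℝ) : Set ℂ :=
  {x ∈ b.chart.source | b.sqDist x ≤ c}

/-- The differential of `sqDist` at a point off `B`. -/
noncomputable def sqDistDeriv (x : ℂ) : ℂ →L[ℝ] ℝ :=
  (2 • innerSL ℝ (b.chart x - b.center)).comp
    ((ContinuousLinearMap.toSpanSingleton ℂ (deriv b.chart x)).restrictScalars ℝ)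

lemma hasStrictFDerivAt_sqDist (hB : IsClosed B) {x : ℂ} (hx : x ∈ b.chart.source \ B) :
    HasStrictFDerivAt b.sqDist (b.sqDistDeriv x) x := by
  have hanalytic : AnalyticAt ℂ b.chart x :=
    b.differentiableOn.analyticOnNhd (b.chart.open_source.sdiff hB) x hx
  have hchart := (hanalytic.hasStrictDerivAt.hasStrictFDerivAt.restrictScalars ℝ).sub_const b.center
  exact HasStrictFDerivAt.comp (g := fun z : ℂ => ‖z‖ ^ 2) x
    (hasStrictFDerivAt_norm_sq (b.chart x - b.center)) hchart

lemma sqDistDeriv_ne_zero {x : ℂ} (hx : x ∈ b.chart.source \ B) (hpos : 0 < b.sqDist x) :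
    b.sqDistDeriv x ≠ 0 := by
  intro hzero
  have hradial : b.sqDistDeriv x ((b.chart x - b.center) / deriv b.chart x) =
      2 * b.sqDist x := by
    simp only [sqDistDeriv, sqDist, ContinuousLinearMap.comp_apply, smul_apply,
      ContinuousLinearMap.coe_restrictScalars', ContinuousLinearMap.toSpanSingleton_apply,
      smul_eq_mul, div_mul_cancel₀ _ (b.deriv_ne_zero x hx), innerSL_apply_apply,
      real_inner_self_eq_norm_sq, nsmul_eq_mul, Nat.cast_ofNat]
  rw [hzero, zero_apply] at hradial
  linarith

lemma continuousOn_sqDist : ContinuousOn b.sqDist b.chart.source := by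
  have hchart := b.chart.continuousOn
  unfold sqDist
  fun_prop

lemma closedBall_sqrt_subset_target (hc : c ≤ b.radius ^ 2) :
    closedBall b.center (√c) ⊆ b.chart.target := by
  refine (closedBall_subset_closedBall ?_).trans b.closedBall_subset_target
  rwa [Real.sqrt_le_left b.radius_pos.le]

lemma disc_eq_image (hc0 : 0 ≤ c) (hc : c ≤ b.radius ^ 2) :
    b.disc c = b.chart.symm '' closedBall b.center (√c) := by
  rw [b.chart.symm.image_eq_target_inter_inv_preimage (b.closedBall_sqrt_subset_target hc)]
  ext x
  simp only [disc, sqDist, mem_ofPred_eq, b.chart.symm_target, b.chart.symm_symm, mem_inter_iff,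
    mem_preimage, mem_closedBall, dist_eq_norm, Real.le_sqrt (norm_nonneg _) hc0]

lemma isCompact_disc (hc0 : 0 ≤ c) (hc : c ≤ b.radius ^ 2) : IsCompact (b.disc c) := by
  rw [b.disc_eq_image hc0 hc]
  exact (isCompact_closedBall _ _).image_of_continuousOn
    (b.chart.continuousOn_symm.mono (b.closedBall_sqrt_subset_target hc))

lemma isPreconnected_disc (hc0 : 0 ≤ c) (hc : c ≤ b.radius ^ 2) : IsPreconnected (b.disc c) := by
  rw [b.disc_eq_image hc0 hc]
  exact (convex_closedBall _ _).isPreconnected.image _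
    (b.chart.continuousOn_symm.mono (b.closedBall_sqrt_subset_target hc))

lemma mem_interior_disc {x : ℂ} (hx : x ∈ b.chart.source) (hlt : b.sqDist x < c) :
    x ∈ interior (b.disc c) := by
  have hsource := b.chart.open_source.mem_nhds hx
  rw [mem_interior_iff_mem_nhds]
  filter_upwards [hsource, (b.continuousOn_sqDist.continuousAt hsource).eventually_lt_const hlt]
    with y hy hylt using ⟨hy, hylt.le⟩

lemma sqDist_eq_of_mem_disc {x : ℂ} (hx : x ∈ b.disc c) (hint : x ∉ interior (b.disc c)) :
    b.sqDist x = c :=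
  hx.2.antisymm (not_lt.1 fun hlt => hint (b.mem_interior_disc hx.1 hlt))

lemma eventually_mem_disc_iff {x : ℂ} (hx : x ∈ b.chart.source) :
    ∀ᶠ y in 𝓝 x, (y ∈ b.disc c ↔ b.sqDist y - c ≤ 0) := by
  filter_upwards [b.chart.open_source.mem_nhds hx] with y hy
  rw [sub_nonpos]
  exact ⟨And.right, fun hyc => ⟨hy, hyc⟩⟩

lemma flatAt_disc (hB : IsClosed B) {x : ℂ} (hx : x ∈ b.chart.source \ B) (hxc : b.sqDist x = c)
    (hc : 0 < c) : FlatAt (b.disc c) x := by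
  refine (flatAt_of_hasStrictFDerivAt ((b.hasStrictFDerivAt_sqDist hB hx).sub_const c)
    (b.sqDistDeriv_ne_zero hx (hxc.symm ▸ hc))).congr ?_
  filter_upwards [b.eventually_mem_disc_iff hx.1] with y hy using hy.symm

end DiscChart

/-! ### Enlarging a planar set by generic discs -/

/-- A disc chart about a boundary point of `B`: in the chart `B` is the exterior of the unit disc,
and the disc is small and centered on the unit circle. -/
structure DiscChart.IsBoundaryDisc {B : Set ℂ} (b : DiscChart B) : Prop where
  isConformalBoundaryChart : IsConformalBoundaryChart b.chart B
  norm_center : ‖b.center‖ = 1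
  radius_le_one : b.radius ≤ 1

lemma exists_isBoundaryDisc {B : Set ℂ} (hB : IsClosed B) {p : ℂ} (hflat : FlatAt B p)
    (hp : p ∈ frontier B) :
    ∃ b : DiscChart B, b.IsBoundaryDisc ∧ p ∈ b.chart.source ∧ b.sqDist p = 0 := by
  obtain ⟨G, hpG, hG⟩ := exists_isConformalBoundaryChart hB hflat hp
  obtain ⟨a, ha, hat⟩ := nhds_basis_closedBall.mem_iff.1
    (G.open_target.mem_nhds (G.map_source hpG))
  let b : DiscChart B :=
    { chart := G
      center := G p
      radius := min a 1
      radius_pos := lt_min ha one_pos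
      closedBall_subset_target := (closedBall_subset_closedBall (min_le_left _ _)).trans hat
      differentiableOn := hG.differentiableOn
      deriv_ne_zero := hG.deriv_ne_zero }
  exact ⟨b, ⟨hG, hG.norm_eq_one hp hpG, min_le_right _ _⟩, hpG, by simp [b, DiscChart.sqDist]⟩

/-- The round disc of radius `a` about the origin, in the identity chart. -/
noncomputable def centralDisc (B : Set ℂ) {a : ℝ} (ha : 0 < a) : DiscChart B where
  chart := OpenPartialHomeomorph.refl ℂ
  center := 0
  radius := a
  radius_pos := ha
  closedBall_subset_target := subset_univ _
  differentiableOn := differentiableOn_id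
  deriv_ne_zero y _ := by
    change deriv id y ≠ 0
    rw [deriv_id]
    exact one_ne_zero

lemma sqDist_centralDisc (B : Set ℂ) {a : ℝ} (ha : 0 < a) (x : ℂ) :
    (centralDisc B ha).sqDist x = ‖x‖ ^ 2 := by
  simp [DiscChart.sqDist, centralDisc]

lemma closedBall_subset_disc_centralDisc (B : Set ℂ) {a r c : ℝ} (ha : 0 < a) (hc : r ^ 2 ≤ c) :
    closedBall 0 r ⊆ (centralDisc B ha).disc c := fun x hx => by
  refine ⟨mem_univ x, ?_⟩
  rw [sqDist_centralDisc]
  exact (pow_le_pow_left₀ (norm_nonneg x) (mem_closedBall_zero_iff.1 hx) 2).trans hc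

section Family

variable {B : Set ℂ} {ι : Type*} {b : ι → DiscChart B} {c : ι → ℝ}

/-- The boundary curves at levels `c` of a family of discs are in general position: off `B` they
meet transversally and no three of them have a common point, and no two of them, the first of
which bounds a boundary disc, meet on the frontier of `B`. -/
structure InGeneralPosition (b : ι → DiscChart B) (c : ι → ℝ) : Prop where
  jacobian_ne_zero : ∀ i j, i ≠ j → ∀ x ∈ ((b i).chart.source ∩ (b j).chart.source) \ B,
    (b i).sqDist x = c i → (b j).sqDist x = c j →
      jacobian ((b i).sqDistDeriv x) ((b j).sqDistDeriv x) ≠ 0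
  ne_of_two : ∀ i j k, i ≠ j → i ≠ k → j ≠ k →
    ∀ x ∈ ((b i).chart.source ∩ (b j).chart.source ∩ (b k).chart.source) \ B,
      (b i).sqDist x = c i → (b j).sqDist x = c j → (b k).sqDist x ≠ c k
  ne_on_frontier : ∀ i j, i ≠ j → (b i).IsBoundaryDisc →
    ∀ x ∈ frontier B ∩ (b i).disc ((b i).radius ^ 2) ∩ (b j).disc ((b j).radius ^ 2),
      (b i).sqDist x = c i → (b j).sqDist x ≠ c j

lemma DiscChart.IsBoundaryDisc.finite_level {b : DiscChart B} (hb : b.IsBoundaryDisc) (c : ℝ) :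
    {x ∈ frontier B ∩ b.chart.source | b.sqDist x = c}.Finite := by
  have hcenter : b.center ≠ 0 := norm_ne_zero_iff.1 (hb.norm_center ▸ one_ne_zero)
  refine ((finite_setOf_norm_eq_one_norm_sub_sq_eq hcenter c).image b.chart.symm).subset ?_
  rintro x ⟨⟨hx, hxb⟩, hxc⟩
  exact ⟨b.chart x, ⟨hb.isConformalBoundaryChart.norm_eq_one hx hxb, hxc⟩, b.chart.left_inv hxb⟩

lemma ae_ne_on_frontier [Fintype ι] {i j : ι} (hij : i ≠ j) (hb : (b i).IsBoundaryDisc) :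
    ∀ᵐ c : ι → ℝ,
      ∀ x ∈ frontier B ∩ (b i).disc ((b i).radius ^ 2) ∩ (b j).disc ((b j).radius ^ 2),
      (b i).sqDist x = c i → (b j).sqDist x ≠ c j := by
  have hcompact (k : ι) : IsCompact ((b k).disc ((b k).radius ^ 2)) :=
    (b k).isCompact_disc (sq_nonneg _) le_rfl
  refine ae_not_two_levels_of_countable hij
    (((hcompact i).inter_left isClosed_frontier).inter_right (hcompact j).isClosed)
    ((b i).continuousOn_sqDist.mono fun x hx => hx.1.2.1)
    ((b j).continuousOn_sqDist.mono fun x hx => hx.2.1) fun c => ?_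
  exact ((hb.finite_level c).subset fun x hx => ⟨⟨hx.1.1.1, hx.1.1.2.1⟩, hx.2⟩).countable

lemma ae_inGeneralPosition [Fintype ι] (hB : IsClosed B) (b : ι → DiscChart B) :
    ∀ᵐ c : ι → ℝ, InGeneralPosition b c := by
  have hderiv (i : ι) {x : ℂ} (hx : x ∈ (b i).chart.source) (hxB : x ∉ B) :
      HasFDerivAt (b i).sqDist ((b i).sqDistDeriv x) x :=
    ((b i).hasStrictFDerivAt_sqDist hB ⟨hx, hxB⟩).hasFDerivAt
  have htwo := ae_all_iff.2 fun i => ae_all_iff.2 fun j => eventually_imp_distrib_left.2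
    fun hij : i ≠ j => ae_jacobian_ne_zero hij
      (T := ((b i).chart.source ∩ (b j).chart.source) \ B)
      (fun x hx => hderiv i hx.1.1 hx.2) (fun x hx => hderiv j hx.1.2 hx.2)
  have hthree := ae_all_iff.2 fun i => ae_all_iff.2 fun j => ae_all_iff.2 fun k =>
    eventually_imp_distrib_left.2 fun hij : i ≠ j =>
    eventually_imp_distrib_left.2 fun hik : i ≠ k =>
    eventually_imp_distrib_left.2 fun hjk : j ≠ k => ae_not_three_levels hij hik hjk
      (T := ((b i).chart.source ∩ (b j).chart.source ∩ (b k).chart.source) \ B)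
      (fun x hx => hderiv i hx.1.1.1 hx.2) (fun x hx => hderiv j hx.1.1.2 hx.2)
      (fun x hx => hderiv k hx.1.2 hx.2)
  have hfrontier := ae_all_iff.2 fun i => ae_all_iff.2 fun j =>
    eventually_imp_distrib_left.2 fun hij : i ≠ j =>
    eventually_imp_distrib_left.2 fun hi : (b i).IsBoundaryDisc => ae_ne_on_frontier hij hi
  filter_upwards [htwo, hthree, hfrontier] with c h₂ h₃ hΓ using ⟨h₂, h₃, hΓ⟩

lemma InGeneralPosition.flatAt_iUnion [Finite ι] (hgen : InGeneralPosition b c) (hB : IsClosed B)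
    (hclosed : ∀ i, IsClosed ((b i).disc (c i))) (hpos : ∀ i, 0 < c i) {x : ℂ}
    (hx : x ∈ (⋃ i, (b i).disc (c i)) \ B) (hint : ∀ i, x ∉ interior ((b i).disc (c i))) :
    FlatAt (⋃ i, (b i).disc (c i)) x := by
  obtain ⟨hxU, hxB⟩ := hx
  obtain ⟨i, hi⟩ := mem_iUnion.1 hxU
  have hlevel {j : ι} (hj : x ∈ (b j).disc (c j)) : (b j).sqDist x = c j :=
    (b j).sqDist_eq_of_mem_disc hj (hint j)
  have hstrict {j : ι} (hj : x ∈ (b j).disc (c j)) :=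
    ((b j).hasStrictFDerivAt_sqDist hB ⟨hj.1, hxB⟩).sub_const (c j)
  by_cases hex : ∃ j, j ≠ i ∧ x ∈ (b j).disc (c j)
  · obtain ⟨j, hji, hj⟩ := hex
    have hiff (k : ι) : x ∈ (b k).disc (c k) ↔ k = i ∨ k = j := by
      refine ⟨fun hk => ?_, by rintro (rfl | rfl) <;> assumption⟩
      by_contra! hne
      exact hgen.ne_of_two k i j hne.1 hne.2 hji.symm x ⟨⟨⟨hk.1, hi.1⟩, hj.1⟩, hxB⟩ (hlevel hk)
        (hlevel hi) (hlevel hj)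
    refine (flatAt_corner (hstrict hi) (hstrict hj) (hgen.jacobian_ne_zero i j hji.symm x
      ⟨⟨hi.1, hj.1⟩, hxB⟩ (hlevel hi) (hlevel hj))).congr ?_
    filter_upwards [eventually_mem_iUnion_iff hclosed x,
      (b i).eventually_mem_disc_iff (c := c i) hi.1,
      (b j).eventually_mem_disc_iff (c := c j) hj.1] with y hy hyi hyj
    simp only [hy, hiff, or_and_right, exists_or, exists_eq_left, hyi, hyj]
  · push Not at hex
    have hiff (k : ι) : x ∈ (b k).disc (c k) ↔ k = i :=
      ⟨fun hk => by_contra fun hne => hex k hne hk, fun hk => hk ▸ hi⟩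
    refine ((b i).flatAt_disc hB ⟨hi.1, hxB⟩ (hlevel hi) (hpos i)).congr ?_
    filter_upwards [eventually_mem_iUnion_iff hclosed x] with y hy
    simp only [hy, hiff, exists_eq_left]

lemma DiscChart.IsBoundaryDisc.flatAt_union_disc {b : DiscChart B} (hb : b.IsBoundaryDisc) {c : ℝ}
    (hc0 : 0 < c) (hc : c < b.radius ^ 2) {x : ℂ} (hx : x ∈ frontier B)
    (hxb : x ∈ b.chart.source) (hxc : b.sqDist x = c) : FlatAt (B ∪ b.disc c) x := by
  have hc4 : c < 4 := by nlinarith [b.radius_pos, hb.radius_le_one]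
  refine FlatAt.of_chart b.chart hxb (flatAt_exterior_union_disc hb.norm_center hc0 hc4
    (hb.isConformalBoundaryChart.norm_eq_one hx hxb) hxc) fun y hy => ?_
  exact or_congr (hb.isConformalBoundaryChart.mem_iff y hy)
    ⟨And.right, fun hyc => ⟨hy, hyc⟩⟩

lemma InGeneralPosition.flatAt_frontier_union [Finite ι] (hgen : InGeneralPosition b c)
    (hB : IsClosed B) (hflat : ∀ x ∈ frontier B, FlatAt B x)
    (hc : ∀ i, c i ∈ Ioo 0 ((b i).radius ^ 2))
    (hb : ∀ i, ∀ x ∈ frontier B ∩ (b i).disc (c i), (∀ k, x ∉ interior ((b k).disc (c k))) →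
      (b i).IsBoundaryDisc) :
    ∀ x ∈ frontier (B ∪ ⋃ i, (b i).disc (c i)), FlatAt (B ∪ ⋃ i, (b i).disc (c i)) x := by
  have hclosed (i : ι) : IsClosed ((b i).disc (c i)) :=
    ((b i).isCompact_disc (hc i).1.le (hc i).2.le).isClosed
  intro x hx
  refine flatAt_of_mem_frontier_union_iUnion hB hclosed (fun x hx hint => ?_)
    (fun x hx hint => hgen.flatAt_iUnion hB hclosed (fun i => (hc i).1) hx hint) hx
  have hlevel {i : ι} (hi : x ∈ (b i).disc (c i)) : (b i).sqDist x = c i :=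
    (b i).sqDist_eq_of_mem_disc hi (hint i)
  refine flatAt_union_iUnion_of_mem hclosed (hflat x hx)
    (fun i hi => (hb i x ⟨hx, hi⟩ hint).flatAt_union_disc (hc i).1 (hc i).2 hx hi.1 (hlevel hi))
    fun i hi j hj => by_contra fun hij => ?_
  have hfull {k : ι} (hk : x ∈ (b k).disc (c k)) : x ∈ (b k).disc ((b k).radius ^ 2) :=
    ⟨hk.1, hk.2.trans (hc k).2.le⟩
  exact hgen.ne_on_frontier i j hij (hb i x ⟨hx, hi⟩ hint) x ⟨⟨hx, hfull hi⟩, hfull hj⟩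
    (hlevel hi) (hlevel hj)

end Family

lemma exists_finite_boundaryDisc_cover {B K : Set ℂ} (hB : IsClosed B)
    (hflat : ∀ x ∈ frontier B, FlatAt B x) (hK : IsCompact K) :
    ∃ (t : Finset (frontier B)) (b : frontier B → DiscChart B),
      (∀ p, (b p).IsBoundaryDisc ∧ (p : ℂ) ∈ (b p).chart.source ∧ (b p).sqDist p = 0) ∧
      ∀ x ∈ frontier B ∩ K, ∃ p ∈ t, x ∈ (b p).chart.source ∧
        (b p).sqDist x < (b p).radius ^ 2 / 4 := by
  choose b hb using fun p : frontier B => exists_isBoundaryDisc hB (hflat p p.2) p.2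
  have hopen (p : frontier B) :
      IsOpen ((b p).chart.source ∩ (b p).sqDist ⁻¹' Iio ((b p).radius ^ 2 / 4)) :=
    (b p).continuousOn_sqDist.isOpen_inter_preimage (b p).chart.open_source isOpen_Iio
  have hcover : frontier B ∩ K ⊆
      ⋃ p, (b p).chart.source ∩ (b p).sqDist ⁻¹' Iio ((b p).radius ^ 2 / 4) := fun x hx => by
    refine mem_iUnion.2 ⟨⟨x, hx.1⟩, (hb ⟨x, hx.1⟩).2.1, ?_⟩
    rw [mem_preimage, (hb ⟨x, hx.1⟩).2.2]
    exact div_pos (pow_pos (b _).radius_pos 2) four_pos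
  obtain ⟨t, ht⟩ := (hK.inter_left isClosed_frontier).elim_finite_subcover _ hopen hcover
  refine ⟨t, b, hb, fun x hx => ?_⟩
  obtain ⟨p, hp, hxp⟩ := mem_iUnion₂.1 (ht hx)
  exact ⟨p, hp, hxp.1, hxp.2⟩

theorem exists_isCompact_enlargement {B : Set ℂ} (hB : IsClosed B)
    (hflat : ∀ x ∈ frontier B, FlatAt B x) {r : ℝ} (hr : 0 < r)
    (hmeet : (closedBall 0 r ∩ B).Nonempty) :
    ∃ X, IsCompact X ∧ closedBall 0 r ⊆ X ∧ (∀ x ∈ frontier (B ∪ X), FlatAt (B ∪ X) x) ∧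
      ∀ x ∈ X, ∃ s ⊆ X, IsPreconnected s ∧ x ∈ s ∧ (s ∩ B).Nonempty := by
  obtain ⟨t, b, hb, hcover⟩ := exists_finite_boundaryDisc_cover hB hflat
    (isCompact_closedBall 0 (r + 1))
  let d : Option t → DiscChart B := fun o => o.elim (centralDisc B (add_pos hr one_pos)) (b ·)
  let lower : Option t → ℝ := fun o => o.elim (r ^ 2) fun p => (b p).radius ^ 2 / 4
  have hlower_pos : ∀ o, 0 < lower o
    | none => pow_pos hr 2
    | some p => div_pos (pow_pos (b p).radius_pos 2) four_pos
  have hlower_lt : ∀ o, lower o < (d o).radius ^ 2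
    | none => pow_lt_pow_left₀ (lt_add_one r) hr.le two_ne_zero
    | some p => div_lt_self (pow_pos (b p).radius_pos 2) (by norm_num)
  obtain ⟨c, hgen, hc⟩ := exists_forall_mem_Ioo_of_ae (ae_inGeneralPosition hB d) hlower_lt
  have hc' (o : Option t) : c o ∈ Ioo 0 ((d o).radius ^ 2) :=
    ⟨(hlower_pos o).trans (hc o).1, (hc o).2⟩
  have hcentral := closedBall_subset_disc_centralDisc B (add_pos hr one_pos) (hc none).1.le
  refine ⟨⋃ o, (d o).disc (c o),
    isCompact_iUnion fun o => (d o).isCompact_disc (hc' o).1.le (hc' o).2.le,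
    hcentral.trans (subset_iUnion (fun o => (d o).disc (c o)) none),
    hgen.flatAt_frontier_union hB hflat hc' ?_, fun x hx => ?_⟩
  · rintro (_ | p) x ⟨hxB, hx⟩ hint
    · have hx' : ‖x‖ ^ 2 < (r + 1) ^ 2 := by
        rw [← sqDist_centralDisc B (add_pos hr one_pos)]
        exact hx.2.trans_lt (hc none).2
      obtain ⟨p, hp, hxp, hlt⟩ := hcover x ⟨hxB, mem_closedBall_zero_iff.2
        (lt_of_pow_lt_pow_left₀ 2 (by positivity) hx').le⟩
      exact absurd ((b p).mem_interior_disc hxp (hlt.trans (hc (some ⟨p, hp⟩)).1))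
        (hint (some ⟨p, hp⟩))
    · exact (hb p).1
  · obtain ⟨o, ho⟩ := mem_iUnion.1 hx
    refine ⟨(d o).disc (c o), subset_iUnion (fun o => (d o).disc (c o)) o,
      (d o).isPreconnected_disc (hc' o).1.le (hc' o).2.le, ho, ?_⟩
    rcases o with _ | p
    · exact hmeet.mono (inter_subset_inter_left B hcentral)
    · exact ⟨p, ⟨(hb p).2.1, (hb p).2.2.trans_le (hc' (some p)).1.le⟩,
        hB.frontier_subset (p : frontier B).2⟩

/-! ### Flat continua in a surface -/

section Surface

variable {X : Type*} [TopologicalSpace X] {A : Set X} {i : ℂ → X}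

lemma flatAt_preimage_iff (hi : IsOpenEmbedding i) {z : ℂ} :
    FlatAt (i ⁻¹' A) z ↔ FlatAt A (i z) := by
  let e := hi.toOpenPartialHomeomorph i
  have hleft (w : ℂ) : e.symm (i w) = w := e.left_inv (mem_univ w)
  refine ⟨fun h => ?_, fun h => FlatAt.of_chart e (mem_univ z) h fun _ _ => Iff.rfl⟩
  refine FlatAt.of_chart e.symm (e.map_source (mem_univ z)) ((hleft z).symm ▸ h) fun y hy => ?_
  have hright : i (e.symm y) = y := e.right_inv hy
  rw [mem_preimage, hright]

lemma isConnected_union_of_forall_exists_isPreconnected {T : Set X} (hA : IsConnected A)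
    (hT : ∀ y ∈ T, ∃ s ⊆ T, IsPreconnected s ∧ y ∈ s ∧ (s ∩ A).Nonempty) :
    IsConnected (A ∪ T) := by
  obtain ⟨a, ha⟩ := hA.nonempty
  refine ⟨⟨a, Or.inl ha⟩, isPreconnected_of_forall a ?_⟩
  rintro y (hy | hy)
  · exact ⟨A, subset_union_left, ha, hy, hA.isPreconnected⟩
  · obtain ⟨s, hsT, hs, hys, w, hws, hwA⟩ := hT y hy
    exact ⟨A ∪ s, union_subset_union_right A hsT, Or.inl ha, Or.inr hys,
      hA.isPreconnected.union w hwA hws hs⟩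

lemma flatAt_union_image_of_mem_frontier [T2Space X] (hi : IsOpenEmbedding i) (hA : IsClosed A)
    (hflat : ∀ x ∈ frontier A, FlatAt A x) {T : Set ℂ} (hT : IsCompact T)
    (hflatT : ∀ z ∈ frontier (i ⁻¹' A ∪ T), FlatAt (i ⁻¹' A ∪ T) z) :
    ∀ x ∈ frontier (A ∪ i '' T), FlatAt (A ∪ i '' T) x := by
  have himage : IsClosed (i '' T) := (hT.image hi.continuous).isClosed
  have hpre : i ⁻¹' (A ∪ i '' T) = i ⁻¹' A ∪ T := by
    rw [preimage_union, preimage_image_eq _ hi.injective]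
  intro x hx
  by_cases hrange : x ∈ range i
  · obtain ⟨z, rfl⟩ := hrange
    rw [← flatAt_preimage_iff hi, hpre]
    refine hflatT z ?_
    rw [← hpre, ← hi.isOpenMap.preimage_frontier_eq_frontier_preimage hi.continuous]
    exact hx
  · have hxT : x ∉ i '' T := fun h => hrange (image_subset_range i T h)
    have hxA : x ∈ A := ((hA.union himage).frontier_subset hx).resolve_right hxT
    have hfrontier : x ∈ frontier A :=
      ⟨subset_closure hxA, fun h => hx.2 (interior_mono subset_union_left h)⟩
    refine (hflat x hfrontier).congr ?_
    filter_upwards [himage.isOpen_compl.mem_nhds hxT] with y hy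
    exact ⟨Or.inl, fun h => h.resolve_right hy⟩

/-- A compact connected set all of whose frontier points are flat. These are the members of the
exhaustion; unlike a general subsurface, such a set lies locally on one side of its boundary. -/
structure IsFlatContinuum (A : Set X) : Prop where
  isCompact : IsCompact A
  isConnected : IsConnected A
  flatAt : ∀ x ∈ frontier A, FlatAt A x

lemma isFlatContinuum_image_closedBall [T2Space X] (hi : IsOpenEmbedding i) :
    IsFlatContinuum (i '' closedBall 0 1) where
  isCompact := (isCompact_closedBall 0 1).image hi.continuous
  isConnected := ((convex_closedBall 0 1).isConnected ⟨0, by simp⟩).image i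
    hi.continuous.continuousOn
  flatAt := by
    have hdisc : (centralDisc ∅ one_pos).disc 1 = closedBall 0 1 := by
      ext z
      simp only [DiscChart.disc, mem_ofPred_eq, sqDist_centralDisc, mem_closedBall_zero_iff,
        sq_le_one_iff₀ (norm_nonneg z)]
      exact and_iff_right (mem_univ z)
    have hball : ∀ z ∈ frontier (closedBall (0 : ℂ) 1), FlatAt (closedBall 0 1) z := fun z hz => by
      rw [frontier_closedBall 0 one_ne_zero, mem_sphere_zero_iff_norm] at hz
      rw [← hdisc]
      refine (centralDisc ∅ one_pos).flatAt_disc isClosed_empty ⟨mem_univ z, notMem_empty z⟩ ?_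
        one_pos
      rw [sqDist_centralDisc, hz, one_pow]
    simpa only [empty_union] using flatAt_union_image_of_mem_frontier hi isClosed_empty (by simp)
      (isCompact_closedBall 0 1) (by simpa only [preimage_empty, empty_union] using hball)

lemma IsFlatContinuum.exists_superset_image_closedBall [T2Space X] (hA : IsFlatContinuum A)
    (hi : IsOpenEmbedding i) (hmeet : (i '' closedBall 0 1 ∩ A).Nonempty) :
    ∃ A', IsFlatContinuum A' ∧ A ∪ i '' closedBall 0 1 ⊆ A' := by
  obtain ⟨_, ⟨z, hz, rfl⟩, hzA⟩ := hmeet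
  have hclosed : IsClosed A := hA.isCompact.isClosed
  have hflat : ∀ z ∈ frontier (i ⁻¹' A), FlatAt (i ⁻¹' A) z := fun z hz => by
    rw [← hi.isOpenMap.preimage_frontier_eq_frontier_preimage hi.continuous] at hz
    exact (flatAt_preimage_iff hi).2 (hA.flatAt _ hz)
  obtain ⟨T, hT, hball, hflatT, hconn⟩ := exists_isCompact_enlargement
    (hclosed.preimage hi.continuous) hflat one_pos ⟨z, hz, hzA⟩
  refine ⟨A ∪ i '' T, ⟨hA.isCompact.union (hT.image hi.continuous),
    isConnected_union_of_forall_exists_isPreconnected hA.isConnected ?_,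
    flatAt_union_image_of_mem_frontier hi hclosed hA.flatAt hT hflatT⟩,
    union_subset_union_right A (image_mono hball)⟩
  rintro _ ⟨w, hw, rfl⟩
  obtain ⟨s, hsT, hs, hws, v, hvs, hvA⟩ := hconn w hw
  exact ⟨i '' s, image_mono hsT, hs.image i hi.continuous.continuousOn, mem_image_of_mem i hws,
    i v, mem_image_of_mem i hvs, hvA⟩

/-- Every point is the image of `0` under an open embedding of the plane. -/
def IsLocallyPlane (X : Type*) [TopologicalSpace X] : Prop :=
  ∀ x : X, ∃ i : ℂ → X, IsOpenEmbedding i ∧ i 0 = x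

lemma isLocallyPlane_of_forall_exists_homeomorph
    (h : ∀ x : X, ∃ U : Set X, IsOpen U ∧ x ∈ U ∧ Nonempty (U ≃ₜ (ℝ × ℝ))) :
    IsLocallyPlane X := fun x => by
  obtain ⟨U, hU, hx, ⟨φ⟩⟩ := h x
  let ψ : ℂ ≃ₜ U := Complex.equivRealProdCLM.toHomeomorph.trans φ.symm
  let τ : ℂ ≃ₜ ℂ := Homeomorph.addRight (ψ.symm ⟨x, hx⟩)
  exact ⟨Subtype.val ∘ τ.trans ψ, hU.isOpenEmbedding_subtypeVal.comp (τ.trans ψ).isOpenEmbedding,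
    by simp [τ]⟩

namespace IsLocallyPlane

lemma locallyCompactSpace [T2Space X] (hX : IsLocallyPlane X) : LocallyCompactSpace X := by
  have : WeaklyLocallyCompactSpace X := ⟨fun x => by
    obtain ⟨i, hi, rfl⟩ := hX x
    exact ⟨i '' closedBall 0 1, (isCompact_closedBall 0 1).image hi.continuous,
      hi.isOpenMap.image_mem_nhds (closedBall_mem_nhds 0 one_pos)⟩⟩
  infer_instance

lemma exists_isOpen_absorbing [T2Space X] (hX : IsLocallyPlane X) (x : X) :
    ∃ V : Set X, IsOpen V ∧ x ∈ V ∧ ∀ A, IsFlatContinuum A → (V ∩ A).Nonempty →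
      ∃ A', IsFlatContinuum A' ∧ A ⊆ A' ∧ V ⊆ interior A' := by
  obtain ⟨i, hi, rfl⟩ := hX x
  have hopen : IsOpen (i '' ball 0 1) := hi.isOpenMap _ isOpen_ball
  have hsub : i '' ball 0 1 ⊆ i '' closedBall 0 1 := image_mono ball_subset_closedBall
  refine ⟨i '' ball 0 1, hopen, mem_image_of_mem i (mem_ball_self one_pos), fun A hA hmeet => ?_⟩
  obtain ⟨A', hA', hAA'⟩ := hA.exists_superset_image_closedBall hi
    (hmeet.mono (inter_subset_inter_left A hsub))
  exact ⟨A', hA', subset_union_left.trans hAA',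
    interior_maximal (hsub.trans (subset_union_right.trans hAA')) hopen⟩

lemma exists_isFlatContinuum_mem_interior [T2Space X] [PreconnectedSpace X]
    (hX : IsLocallyPlane X) (hA : IsFlatContinuum A) (x : X) :
    ∃ A', IsFlatContinuum A' ∧ A ⊆ A' ∧ x ∈ interior A' := by
  let R : Set X := {x | ∃ A', IsFlatContinuum A' ∧ A ⊆ A' ∧ x ∈ interior A'}
  have hopen : IsOpen R := isOpen_iff_mem_nhds.2 fun y ⟨A', hA', hAA', hy⟩ => by
    filter_upwards [isOpen_interior.mem_nhds hy] with z hz using ⟨A', hA', hAA', hz⟩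
  have hclosed : IsClosed R := closure_subset_iff_isClosed.1 fun y hy => by
    obtain ⟨V, hV, hyV, habs⟩ := hX.exists_isOpen_absorbing y
    obtain ⟨z, hzV, A₁, hA₁, hAA₁, hz⟩ := mem_closure_iff.1 hy V hV hyV
    obtain ⟨A₂, hA₂, hA₁₂, hVA₂⟩ := habs A₁ hA₁ ⟨z, hzV, interior_subset hz⟩
    exact ⟨A₂, hA₂, hAA₁.trans hA₁₂, hVA₂ hyV⟩
  have hne : R.Nonempty := by
    obtain ⟨y, hy⟩ := hA.isConnected.nonempty
    obtain ⟨V, -, hyV, habs⟩ := hX.exists_isOpen_absorbing y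
    obtain ⟨A', hA', hAA', hVA'⟩ := habs A hA ⟨y, hyV, hy⟩
    exact ⟨y, A', hA', hAA', hVA' hyV⟩
  exact (IsClopen.eq_univ ⟨hclosed, hopen⟩ hne).superset (mem_univ x)

lemma exists_isFlatContinuum_subset_interior [T2Space X] [PreconnectedSpace X]
    (hX : IsLocallyPlane X) {C : Set X} (hC : IsCompact C) :
    ∀ A : Set X, IsFlatContinuum A → ∃ A', IsFlatContinuum A' ∧ A ⊆ A' ∧ C ⊆ interior A' := by
  refine hC.induction_on (fun A hA => ⟨A, hA, Subset.rfl, empty_subset _⟩) ?_ ?_ fun x _ => ?_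
  · intro s t hst ht A hA
    obtain ⟨A', hA', hAA', htA'⟩ := ht A hA
    exact ⟨A', hA', hAA', hst.trans htA'⟩
  · intro s t hs ht A hA
    obtain ⟨A₁, hA₁, hAA₁, hsA₁⟩ := hs A hA
    obtain ⟨A₂, hA₂, hA₁₂, htA₂⟩ := ht A₁ hA₁
    exact ⟨A₂, hA₂, hAA₁.trans hA₁₂, union_subset (hsA₁.trans (interior_mono hA₁₂)) htA₂⟩
  · obtain ⟨V, hV, hxV, habs⟩ := hX.exists_isOpen_absorbing x
    refine ⟨V, mem_nhdsWithin_of_mem_nhds (hV.mem_nhds hxV), fun A hA => ?_⟩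
    obtain ⟨A₁, hA₁, hAA₁, hx⟩ := hX.exists_isFlatContinuum_mem_interior hA x
    obtain ⟨A₂, hA₂, hA₁₂, hVA₂⟩ := habs A₁ hA₁ ⟨x, hxV, interior_subset hx⟩
    exact ⟨A₂, hA₂, hAA₁.trans hA₁₂, hVA₂⟩

theorem exists_isFlatContinuum_exhaustion [T2Space X] [ConnectedSpace X]
    [SecondCountableTopology X] (hX : IsLocallyPlane X) :
    ∃ K : ℕ → Set X, (∀ n, IsFlatContinuum (K n)) ∧ (∀ n, K n ⊆ interior (K (n + 1))) ∧
      ⋃ n, K n = univ := by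
  have := hX.locallyCompactSpace
  have hnext (n : ℕ) (A : {A : Set X // IsFlatContinuum A}) :
      ∃ A' : {A : Set X // IsFlatContinuum A}, A.1 ∪ compactCovering X n ⊆ interior A'.1 := by
    obtain ⟨A', hA', -, hsub⟩ := hX.exists_isFlatContinuum_subset_interior
      (A.2.isCompact.union (isCompact_compactCovering X n)) A A.2
    exact ⟨⟨A', hA'⟩, hsub⟩
  choose next hnext using hnext
  obtain ⟨i, hi, -⟩ := hX (Classical.arbitrary X)
  let K (n : ℕ) : {A : Set X // IsFlatContinuum A} :=
    Nat.rec ⟨i '' closedBall 0 1, isFlatContinuum_image_closedBall hi⟩ next n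
  have hK (n : ℕ) : (K n).1 ∪ compactCovering X n ⊆ interior (K (n + 1)).1 := hnext n (K n)
  refine ⟨fun n => (K n).1, fun n => (K n).2, fun n => subset_union_left.trans (hK n),
    eq_univ_iff_forall.2 fun x => ?_⟩
  obtain ⟨n, hn⟩ := exists_mem_compactCovering x
  exact mem_iUnion.2 ⟨n + 1, interior_subset (hK n (Or.inr hn))⟩

end IsLocallyPlane

/-! ### Flat sets are subsurfaces -/

lemma exists_isOpen_homeomorph_of_range_eq {T : Type*} [TopologicalSpace T] {k : T → X}
    (hk : IsEmbedding k) {V : Set X} (hV : IsOpen V) (hrange : range k = A ∩ V) {x : A}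
    (hx : (x : X) ∈ V) : ∃ U : Set A, IsOpen U ∧ x ∈ U ∧ Nonempty (U ≃ₜ T) := by
  have hkA (t : T) : k t ∈ A := (hrange.subset (mem_range_self t)).1
  have hrange' : range (codRestrict k A hkA) = Subtype.val ⁻¹' V := by
    refine Subset.antisymm (range_subset_iff.2 fun t => ?_) fun y hy => ?_
    · exact (hrange.subset (mem_range_self t)).2
    · obtain ⟨t, ht⟩ := hrange.superset ⟨y.2, hy⟩
      exact ⟨t, Subtype.ext ht⟩
  exact ⟨Subtype.val ⁻¹' V, hV.preimage continuous_subtype_val, hx,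
    ⟨((hk.codRestrict A hkA).toHomeomorph.trans (Homeomorph.setCongr hrange')).symm⟩⟩

lemma exists_isOpenEmbedding_of_mem_nhds (e : OpenPartialHomeomorph X ℂ) {x : X}
    (hx : x ∈ e.source) {O : Set X} (hO : O ∈ 𝓝 x) :
    ∃ j : ℂ → X, IsOpenEmbedding j ∧ j 0 = x ∧ range j ⊆ O ∩ e.source ∧
      ∀ z, ∃ t : ℝ, 0 < t ∧ e (j z) = e x + t * z := by
  have hnhds : e.symm ⁻¹' O ∩ e.target ∈ 𝓝 (e x) :=
    inter_mem ((e.continuousAt_symm (e.map_source hx)).preimage_mem_nhds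
      ((e.left_inv hx).symm ▸ hO)) (e.open_target.mem_nhds (e.map_source hx))
  obtain ⟨ε, hε, hball⟩ := Metric.mem_nhds_iff.1 hnhds
  let b : OpenPartialHomeomorph ℂ ℂ := OpenPartialHomeomorph.univBall (e x) ε
  have hsource : b.source = univ := OpenPartialHomeomorph.univBall_source _ _
  have hb (z : ℂ) : b z ∈ e.symm ⁻¹' O ∩ e.target := by
    refine hball (OpenPartialHomeomorph.univBall_target (e x) hε ▸ b.map_source ?_)
    exact hsource.superset (mem_univ z)
  have htrans : (b.trans e.symm).source = univ := by
    rw [b.trans_source, hsource, univ_inter]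
    exact eq_univ_of_forall fun z => (hb z).2
  refine ⟨b.trans e.symm, (b.trans e.symm).isOpenEmbedding htrans, ?_, ?_, fun z =>
    ⟨ε * (√(1 + ‖z‖ ^ 2))⁻¹, by positivity, ?_⟩⟩
  · change e.symm (OpenPartialHomeomorph.univBall (e x) ε 0) = x
    rw [OpenPartialHomeomorph.univBall_apply_zero, e.left_inv hx]
  · rintro _ ⟨z, rfl⟩
    exact ⟨(hb z).1, e.map_target (hb z).2⟩
  · change e (e.symm (b z)) = _
    rw [e.right_inv (hb z).2]
    simp only [b, OpenPartialHomeomorph.univBall, dif_pos hε]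
    change ε • ((√(1 + ‖z‖ ^ 2))⁻¹ • z) + e x = _
    rw [Complex.real_smul, Complex.real_smul]
    push_cast
    ring

lemma IsLocallyPlane.exists_isOpen_homeomorph_of_mem_interior (hX : IsLocallyPlane X) {x : A}
    (hx : (x : X) ∈ interior A) : ∃ U : Set A, IsOpen U ∧ x ∈ U ∧ Nonempty (U ≃ₜ (ℝ × ℝ)) := by
  obtain ⟨i, hi, hi0⟩ := hX x
  obtain ⟨j, hj, hj0, hrange, -⟩ := exists_isOpenEmbedding_of_mem_nhds
    (hi.toOpenPartialHomeomorph i).symm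
    (hi0 ▸ (hi.toOpenPartialHomeomorph i).map_source (mem_univ 0)) (isOpen_interior.mem_nhds hx)
  let ρ : ℝ × ℝ ≃ₜ ℂ := Complex.equivRealProdCLM.symm.toHomeomorph
  refine exists_isOpen_homeomorph_of_range_eq (hj.isEmbedding.comp ρ.isEmbedding) hj.isOpen_range
    ?_ ⟨0, hj0⟩
  rw [ρ.surjective.range_comp, inter_eq_right.2]
  exact hrange.trans (inter_subset_left.trans interior_subset)

/-- The parametrization of the closed lower half plane by `ℝ × [0, ∞)`. -/
noncomputable def lowerHalfPlaneParam (p : ℝ × {y : ℝ // 0 ≤ y}) : ℂ :=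
  Complex.equivRealProdCLM.symm (p.1, -(p.2 : ℝ))

lemma isEmbedding_lowerHalfPlaneParam : IsEmbedding lowerHalfPlaneParam :=
  Complex.equivRealProdCLM.symm.toHomeomorph.isEmbedding.comp
    (IsEmbedding.id.prodMap ((Homeomorph.neg ℝ).isEmbedding.comp IsEmbedding.subtypeVal))

lemma range_lowerHalfPlaneParam : range lowerHalfPlaneParam = {z | z.im ≤ 0} := by
  refine (range_subset_iff.2 fun p => ?_).antisymm fun z hz =>
    ⟨(z.re, ⟨-z.im, neg_nonneg.2 hz⟩), Complex.ext ?_ ?_⟩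
  · simpa [lowerHalfPlaneParam] using p.2.2
  · simp [lowerHalfPlaneParam]
  · simp [lowerHalfPlaneParam]

lemma FlatAt.exists_isOpen_homeomorph {x : A} (hflat : FlatAt A (x : X))
    (hx : (x : X) ∈ frontier A) :
    ∃ U : Set A, IsOpen U ∧ x ∈ U ∧ Nonempty (U ≃ₜ (ℝ × {y : ℝ // 0 ≤ y})) := by
  obtain ⟨e, hxe, he⟩ := hflat
  have him : (e x).im = 0 := eq_of_mem_frontier_of_eventually_mem_iff_le
    (f := fun y => (e y).im) (Complex.continuous_im.continuousAt.comp (e.continuousAt hxe))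
    (eventually_of_mem (e.open_source.mem_nhds hxe) he) hx
  obtain ⟨j, hj, hj0, hrange, hray⟩ := exists_isOpenEmbedding_of_mem_nhds e hxe univ_mem
  have hjA (z : ℂ) : j z ∈ A ↔ z.im ≤ 0 := by
    obtain ⟨t, ht, hjz⟩ := hray z
    rw [he _ (hrange (mem_range_self z)).2, hjz, Complex.add_im, him, zero_add,
      Complex.im_ofReal_mul]
    exact smul_nonpos_iff_nonpos_of_pos_left ht
  refine exists_isOpen_homeomorph_of_range_eq
    (hj.isEmbedding.comp isEmbedding_lowerHalfPlaneParam) hj.isOpen_range ?_ ⟨0, hj0⟩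
  rw [range_comp, range_lowerHalfPlaneParam, ← image_preimage_eq_inter_range]
  congr
  ext z
  exact (hjA z).symm

theorem IsLocallyPlane.isSubsurfaceWithBoundary (hX : IsLocallyPlane X)
    (hflat : ∀ x ∈ frontier A, FlatAt A x) : IsSubsurfaceWithBoundary A := fun x => by
  by_cases hx : (x : X) ∈ interior A
  · obtain ⟨U, hU, hxU, hplane⟩ := hX.exists_isOpen_homeomorph_of_mem_interior hx
    exact ⟨U, hU, hxU, Or.inl hplane⟩
  · have hfrontier : (x : X) ∈ frontier A := ⟨subset_closure x.2, hx⟩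
    obtain ⟨U, hU, hxU, hhalf⟩ := (hflat x hfrontier).exists_isOpen_homeomorph hfrontier
    exact ⟨U, hU, hxU, Or.inr hhalf⟩

end Surface

end SurfaceExhaustion

theorem open_surface_compact_exhaustion_general
    (M : Type*) [TopologicalSpace M] [T2Space M] [SecondCountableTopology M]
    [ConnectedSpace M]
    (hsurf : ∀ x : M, ∃ U : Set M, IsOpen U ∧ x ∈ U ∧ Nonempty (U ≃ₜ (ℝ × ℝ))) :
    ∃ K : ℕ → Set M,
      (∀ n, IsCompact (K n) ∧ IsConnected (K n) ∧ IsSubsurfaceWithBoundary (K n)) ∧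
      (∀ n, K n ⊆ interior (K (n + 1))) ∧
      (⋃ n, K n) = Set.univ := by
  have hplane := SurfaceExhaustion.isLocallyPlane_of_forall_exists_homeomorph hsurf
  obtain ⟨K, hK, hsub, hunion⟩ := hplane.exists_isFlatContinuum_exhaustion
  exact ⟨K, fun n => ⟨(hK n).isCompact, (hK n).isConnected,
    hplane.isSubsurfaceWithBoundary (hK n).flatAt⟩, hsub, hunion⟩

/-- Every connected, noncompact, second-countable (Hausdorff) topological surface
without boundary admits a compact exhaustion by connected compact
subsurfaces-with-boundary: compact connected subsurfaces `K 0 ⊆ K 1 ⊆ ⋯` with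
`K n ⊆ int (K (n+1))` for all `n` and `⋃ n, K n = M`. -/
theorem open_surface_compact_exhaustion
    (M : Type*) [TopologicalSpace M] [T2Space M] [SecondCountableTopology M]
    [ConnectedSpace M] (hnc : ¬ CompactSpace M)
    (hsurf : ∀ x : M, ∃ U : Set M, IsOpen U ∧ x ∈ U ∧ Nonempty (U ≃ₜ (ℝ × ℝ))) :
    ∃ K : ℕ → Set M,
      (∀ n, IsCompact (K n) ∧ IsConnected (K n) ∧ IsSubsurfaceWithBoundary (K n)) ∧
      (∀ n, K n ⊆ interior (K (n + 1))) ∧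
      (⋃ n, K n) = Set.univ :=
  open_surface_compact_exhaustion_general M hsurf
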